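/- arXiv:2411.13575 — 3 statements merged into one kernel-verified Lean document; each statement's English description precedes it below -/
import Mathlib

section
/- Let κ > 0 and let U ⊆ ℝ² be an open connected set whose complement K = ℝ² \ U is compact and connected. Let L = {x₀ + sθ : s ∈ ℝ} be a straight line (x₀ ∈ ℝ², θ a unit vector) with L ⊆ U. If ψ₁ and ψ₂ are radiation solutions on U such that Im ψ₁(x) = Im ψ₂(x) for all x ∈ L, then ψ₁(x) = ψ₂(x) for all x ∈ U. -/
noncomputable section

open Real MeasureTheory Set

/-- The plane `ℝ²`. -/
abbrev R2 : Type := EuclideanSpace ℝ (Fin 2)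

/-- The Laplacian of a complex-valued function on `ℝ²`, as the sum of the second
derivatives along the standard coordinate directions. -/
def laplacian2 (f : R2 → ℂ) (x : R2) : ℂ :=
  ∑ i : Fin 2,
    fderiv ℝ (fun y => fderiv ℝ f y (EuclideanSpace.single i 1)) x (EuclideanSpace.single i 1)

/-- `ψ` is a radiation solution of the Helmholtz equation `Δψ + κ²ψ = 0` on `U`:
it is `C²` on `U`, satisfies the Helmholtz equation on `U`, and satisfies the
Sommerfeld radiation condition
`√|x| (∂ψ/∂|x| − iκψ)(x) → 0` as `|x| → ∞`, uniformly in `x/|x|`. -/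
def IsRadiationSolution (κ : ℝ) (U : Set R2) (ψ : R2 → ℂ) : Prop :=
  ContDiffOn ℝ 2 ψ U ∧
  (∀ x ∈ U, laplacian2 ψ x + (κ : ℂ) ^ 2 * ψ x = 0) ∧
  ∀ ε > 0, ∃ R > 0, ∀ x ∈ U, R ≤ ‖x‖ →
    ‖(Real.sqrt ‖x‖ : ℂ) *
      (fderiv ℝ ψ x (‖x‖⁻¹ • x) - Complex.I * (κ : ℂ) * ψ x)‖ < ε

/-!
Let `ψ = ψ₁ - ψ₂`. After a rigid motion the line is the real axis, `Im ψ = 0` on it, and `K` lies in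
the open lower half-plane.

The function `φ(z) = ψ(z) + ψ(conj z)` solves the Helmholtz equation off `K` and its mirror image
and is even under conjugation. So is `φ - conj φ`, which vanishes on the real axis; by evenness its
Cauchy data vanish there, and unique continuation shows that `φ` is real outside a disc. Each
Fourier mode of a real `φ` satisfies the incoming radiation condition along with the outgoing one,
hence tends to zero together with its derivative faster than `r ^ (-1 / 2)`, and Bessel's equation
forces it to vanish. So `φ = 0` and `ψ` is odd under conjugation.

Oddness extends `ψ` from the upper half-plane to an entire solution. Its modes carry no flux through
circles, so they too satisfy both radiation conditions; the entire solution is zero, and `ψ = 0` by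
unique continuation.

Neither the rigid motion nor the reflection preserves the origin about which the radiation condition
is imposed. On a circle about another center the radial derivative differs from the required one by
a tangential derivative, which integration by parts removes from every Fourier mode.
-/

open Filter Topology Bornology Asymptotics Laplacian InnerProductSpace
open scoped ComplexConjugate

section Helmholtz

variable {E E' F G : Type*}
  [NormedAddCommGroup E] [InnerProductSpace ℝ E] [FiniteDimensional ℝ E]
  [NormedAddCommGroup E'] [InnerProductSpace ℝ E'] [FiniteDimensional ℝ E']
  [NormedAddCommGroup F] [NormedSpace ℝ F] [NormedAddCommGroup G] [NormedSpace ℝ G]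
  {κ : ℝ} {f g : E → F} {s t : Set E} {x : E}

/-- `f` is a classical solution of the Helmholtz equation `Δf + κ²f = 0` at every point of `s`.
Being `C²` at a point is a condition on a neighbourhood, so `s` need not be open. -/
def IsHelmholtzOn (κ : ℝ) (f : E → F) (s : Set E) : Prop :=
  ∀ x ∈ s, ContDiffAt ℝ 2 f x ∧ Δ f x = -κ ^ 2 • f x

namespace IsHelmholtzOn

lemma mono (hf : IsHelmholtzOn κ f t) (hst : s ⊆ t) : IsHelmholtzOn κ f s :=
  fun x hx ↦ hf x (hst hx)

lemma union (hs : IsHelmholtzOn κ f s) (ht : IsHelmholtzOn κ f t) : IsHelmholtzOn κ f (s ∪ t) :=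
  fun x hx ↦ hx.elim (hs x) (ht x)

lemma congr (hf : IsHelmholtzOn κ f s) (h : ∀ x ∈ s, g =ᶠ[𝓝 x] f) : IsHelmholtzOn κ g s := by
  intro x hx
  obtain ⟨hfx, hΔ⟩ := hf x hx
  refine ⟨hfx.congr_of_eventuallyEq (h x hx), ?_⟩
  rw [(laplacian_congr_nhds (h x hx)).eq_of_nhds, (h x hx).eq_of_nhds, hΔ]

lemma congr_of_isOpen (hf : IsHelmholtzOn κ f s) (hs : IsOpen s) (h : EqOn g f s) :
    IsHelmholtzOn κ g s :=
  hf.congr fun _ hx ↦ h.eventuallyEq_of_mem (hs.mem_nhds hx)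

lemma add (hf : IsHelmholtzOn κ f s) (hg : IsHelmholtzOn κ g s) :
    IsHelmholtzOn κ (f + g) s := by
  intro x hx
  obtain ⟨⟨hf, hΔf⟩, ⟨hg, hΔg⟩⟩ := hf x hx, hg x hx
  refine ⟨hf.add hg, ?_⟩
  rw [hf.laplacian_add hg, hΔf, hΔg, Pi.add_apply, smul_add]

lemma clm_comp (hf : IsHelmholtzOn κ f s) (l : F →L[ℝ] G) : IsHelmholtzOn κ (l ∘ f) s := by
  intro x hx
  obtain ⟨hf, hΔ⟩ := hf x hx
  refine ⟨l.contDiff.contDiffAt.comp x hf, ?_⟩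
  rw [hf.laplacian_CLM_comp_left, Function.comp_apply, hΔ, map_smul, Function.comp_apply]

lemma neg (hf : IsHelmholtzOn κ f s) : IsHelmholtzOn κ (-f) s :=
  hf.clm_comp (-ContinuousLinearMap.id ℝ F)

lemma sub (hf : IsHelmholtzOn κ f s) (hg : IsHelmholtzOn κ g s) : IsHelmholtzOn κ (f - g) s :=
  sub_eq_add_neg f g ▸ hf.add hg.neg

lemma hasFDerivAt (hf : IsHelmholtzOn κ f s) (hx : x ∈ s) : HasFDerivAt f (fderiv ℝ f x) x :=
  ((hf x hx).1.differentiableAt (by norm_num)).hasFDerivAt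

lemma hasFDerivAt_fderiv (hf : IsHelmholtzOn κ f s) (hx : x ∈ s) :
    HasFDerivAt (fderiv ℝ f) (fderiv ℝ (fderiv ℝ f) x) x :=
  (((hf x hx).1.fderiv_right (m := 1) (by norm_num)).differentiableAt (by norm_num)).hasFDerivAt

end IsHelmholtzOn

lemma laplacian_eq_sum_fderiv_fderiv {ι : Type*} [Fintype ι] (b : OrthonormalBasis ι ℝ E)
    (f : E → F) (x : E) : Δ f x = ∑ i, fderiv ℝ (fderiv ℝ f) x (b i) (b i) := by
  simp [laplacian_eq_iteratedFDeriv_orthonormalBasis f b, iteratedFDeriv_two_apply]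

lemma laplacian_comp_linearIsometryEquiv (l : E ≃ₗᵢ[ℝ] E') (f : E' → F) (x : E) :
    Δ (f ∘ l) x = Δ f (l x) := by
  rw [laplacian_eq_iteratedFDeriv_orthonormalBasis _ (stdOrthonormalBasis ℝ E),
    laplacian_eq_iteratedFDeriv_orthonormalBasis _ ((stdOrthonormalBasis ℝ E).map l)]
  refine Finset.sum_congr rfl fun i _ ↦ ?_
  have h := l.toContinuousLinearEquiv.iteratedFDerivWithin_comp_right f uniqueDiffOn_univ
    (mem_univ (l x)) 2
  simp only [preimage_univ, iteratedFDerivWithin_univ] at h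
  rw [show f ∘ l = f ∘ l.toContinuousLinearEquiv from rfl, h,
    ContinuousMultilinearMap.compContinuousLinearMap_apply]
  congr 1
  ext j
  fin_cases j <;> simp

lemma laplacian_comp_affineIsometryEquiv (e : E ≃ᵃⁱ[ℝ] E') (f : E' → F) (x : E) :
    Δ (f ∘ e) x = Δ f (e x) := by
  have he (y : E) : e y = e.linearIsometryEquiv y + e 0 := by simpa using e.map_vadd 0 y
  rw [show f ∘ e = (fun y ↦ f (y + e 0)) ∘ e.linearIsometryEquiv from
      funext fun y ↦ congrArg f (he y),
    laplacian_comp_linearIsometryEquiv, he x]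
  simp only [laplacian_eq_iteratedFDeriv_stdOrthonormalBasis, iteratedFDeriv_comp_add_right]

lemma IsHelmholtzOn.comp_affineIsometryEquiv {f : E' → F} {s : Set E'}
    (hf : IsHelmholtzOn κ f s) (e : E ≃ᵃⁱ[ℝ] E') : IsHelmholtzOn κ (f ∘ e) (e ⁻¹' s) := by
  intro x hx
  obtain ⟨hfx, hΔ⟩ := hf (e x) hx
  refine ⟨hfx.comp x e.toContinuousAffineEquiv.toContinuousAffineMap.contDiff.contDiffAt, ?_⟩
  rw [laplacian_comp_affineIsometryEquiv, hΔ, Function.comp_apply]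

lemma laplacian2_eq_laplacian {f : R2 → ℂ} {x : R2} (hf : ContDiffAt ℝ 2 f x) :
    laplacian2 f x = Δ f x := by
  have hf' : DifferentiableAt ℝ (fderiv ℝ f) x :=
    (hf.fderiv_right (m := 1) (by norm_num)).differentiableAt (by norm_num)
  rw [laplacian_eq_sum_fderiv_fderiv (EuclideanSpace.basisFun (Fin 2) ℝ), laplacian2]
  refine Finset.sum_congr rfl fun i _ ↦ ?_
  rw [fderiv_clm_apply hf' (by fun_prop)]
  simp

lemma IsRadiationSolution.isHelmholtzOn {U : Set R2} {ψ : R2 → ℂ} (hU : IsOpen U)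
    (h : IsRadiationSolution κ U ψ) : IsHelmholtzOn κ ψ U := by
  intro x hx
  have hψ : ContDiffAt ℝ 2 ψ x := h.1.contDiffAt (hU.mem_nhds hx)
  refine ⟨hψ, ?_⟩
  rw [← laplacian2_eq_laplacian hψ, eq_neg_of_add_eq_zero_left (h.2.1 x hx), neg_smul,
    Complex.real_smul, Complex.ofReal_pow]

lemma IsHelmholtzOn.add_mul_I_eq {f : ℂ → F} {s : Set ℂ} {z u : ℂ} (hf : IsHelmholtzOn κ f s)
    (hz : z ∈ s) (hu : ‖u‖ = 1) :
    fderiv ℝ (fderiv ℝ f) z u u +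
      fderiv ℝ (fderiv ℝ f) z (Complex.I * u) (Complex.I * u) = -κ ^ 2 • f z := by
  obtain ⟨c, rfl⟩ : ∃ c : Circle, (c : ℂ) = u :=
    ⟨⟨u, by simpa [Submonoid.unitSphere] using hu⟩, rfl⟩
  rw [← (hf z hz).2,
    laplacian_eq_sum_fderiv_fderiv (Complex.orthonormalBasisOneI.map (rotation c)),
    Fin.sum_univ_two]
  simp [mul_comm]

end Helmholtz

section Indicator

lemma eventually_mem_or_eventually_notMem_of_notMem_frontier {X : Type*} [TopologicalSpace X]
    {s : Set X} {x : X} (hx : x ∉ frontier s) :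
    (∀ᶠ y in 𝓝 x, y ∈ s) ∨ ∀ᶠ y in 𝓝 x, y ∉ s := by
  rcases em (x ∈ s) with h | h
  · exact .inl (mem_interior_iff_mem_nhds.1 ((mem_interior_iff_notMem_frontier h).2 hx))
  · rw [← frontier_compl] at hx
    exact .inr (mem_interior_iff_mem_nhds.1 ((mem_interior_iff_notMem_frontier h).2 hx))

lemma continuousOn_indicator {X F : Type*} [TopologicalSpace X] [TopologicalSpace F] [Zero F]
    {f : X → F} {s V : Set X} (hf : ContinuousOn f V) (h0 : ∀ x ∈ V ∩ frontier s, f x = 0) :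
    ContinuousOn (s.indicator f) V := by
  classical
  rw [← piecewise_eq_indicator]
  exact .piecewise h0 (hf.mono inter_subset_left) continuousOn_const

variable {E F : Type*} [NormedAddCommGroup E] [NormedAddCommGroup F] [NormedSpace ℝ F]

lemma hasFDerivAt_indicator [NormedSpace ℝ E] {f : E → F} {f' : E → E →L[ℝ] F} {s : Set E} {x : E}
    (hf : HasFDerivAt f (f' x) x) (h0 : x ∈ frontier s → f x = 0 ∧ f' x = 0) :
    HasFDerivAt (s.indicator f) (s.indicator f' x) x := by
  by_cases hx : x ∈ frontier s
  · obtain ⟨hfx, hf'x⟩ := h0 hx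
    rw [indicator_apply_eq_zero.2 fun _ ↦ hf'x]
    refine .of_isLittleO (IsBigO.trans_isLittleO (.of_norm_le fun y ↦ ?_) hf.isLittleO.norm_left)
    have hsx : s.indicator f x = 0 := indicator_apply_eq_zero.2 fun _ ↦ hfx
    simpa [hfx, hf'x, hsx] using norm_indicator_le_norm_self f y
  · rcases eventually_mem_or_eventually_notMem_of_notMem_frontier hx with h | h
    · rw [indicator_of_mem h.self_of_nhds]
      exact hf.congr_of_eventuallyEq (h.mono fun y hy ↦ indicator_of_mem hy f)
    · rw [indicator_of_notMem h.self_of_nhds]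
      exact (hasFDerivAt_const 0 x).congr_of_eventuallyEq
        (h.mono fun y hy ↦ indicator_of_notMem hy f)

lemma IsHelmholtzOn.indicator [InnerProductSpace ℝ E] [FiniteDimensional ℝ E] {κ : ℝ} {f : E → F}
    {s V : Set E} (hV : IsOpen V) (hf : IsHelmholtzOn κ f V)
    (h0 : ∀ x ∈ V ∩ frontier s, f x = 0 ∧ fderiv ℝ f x = 0 ∧ fderiv ℝ (fderiv ℝ f) x = 0) :
    IsHelmholtzOn κ (s.indicator f) V := by
  have hD {x} (hx : x ∈ V) : HasFDerivAt (s.indicator f) (s.indicator (fderiv ℝ f) x) x :=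
    hasFDerivAt_indicator (hf.hasFDerivAt hx) fun h ↦ ⟨(h0 x ⟨hx, h⟩).1, (h0 x ⟨hx, h⟩).2.1⟩
  have hfderiv : EqOn (fderiv ℝ (s.indicator f)) (s.indicator (fderiv ℝ f)) V :=
    fun x hx ↦ (hD hx).fderiv
  have hD₂ {x} (hx : x ∈ V) : HasFDerivAt (s.indicator (fderiv ℝ f))
      (s.indicator (fderiv ℝ (fderiv ℝ f)) x) x :=
    hasFDerivAt_indicator (hf.hasFDerivAt_fderiv hx) fun h ↦ (h0 x ⟨hx, h⟩).2
  have hfderiv₂ : EqOn (fderiv ℝ (fderiv ℝ (s.indicator f)))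
      (s.indicator (fderiv ℝ (fderiv ℝ f))) V := fun x hx ↦ by
    rw [(hfderiv.eventuallyEq_of_mem (hV.mem_nhds hx)).fderiv_eq, (hD₂ hx).fderiv]
  have hcont : ContinuousOn (fderiv ℝ (fderiv ℝ f)) V := fun x hx ↦
    (((hf x hx).1.fderiv_right (m := 1) (by norm_num)).fderiv_right (m := 0)
      (by norm_num)).continuousAt.continuousWithinAt
  have hC1 : ContDiffOn ℝ 1 (s.indicator (fderiv ℝ f)) V :=
    zero_add (1 : WithTop ℕ∞) ▸ (contDiffOn_succ_iff_fderiv_of_isOpen hV).2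
      ⟨fun x hx ↦ (hD₂ hx).differentiableAt.differentiableWithinAt, by simp, contDiffOn_zero.2 <|
        (continuousOn_indicator hcont fun x hx ↦ (h0 x hx).2.2).congr fun x hx ↦ (hD₂ hx).fderiv⟩
  have hC2 : ContDiffOn ℝ 2 (s.indicator f) V :=
    (one_add_one_eq_two (R := WithTop ℕ∞)) ▸ (contDiffOn_succ_iff_fderiv_of_isOpen hV).2
      ⟨fun x hx ↦ (hD hx).differentiableAt.differentiableWithinAt, by simp, hC1.congr hfderiv⟩
  refine fun x hx ↦ ⟨hC2.contDiffAt (hV.mem_nhds hx), ?_⟩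
  let b := stdOrthonormalBasis ℝ E
  rw [laplacian_eq_sum_fderiv_fderiv b, hfderiv₂ hx]
  by_cases hxs : x ∈ s
  · simp_rw [indicator_of_mem hxs, ← (hf x hx).2, laplacian_eq_sum_fderiv_fderiv b]
  · simp [indicator_of_notMem hxs]

end Indicator

section Radiation

variable {E E' : Type*} [NormedAddCommGroup E] [NormedSpace ℝ E]
  [NormedAddCommGroup E'] [NormedSpace ℝ E'] {κ : ℝ} {q : E} {f g : E → ℂ}

lemma fderiv_comp_affineIsometryEquiv {F : Type*} [NormedAddCommGroup F] [NormedSpace ℝ F]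
    (e : E ≃ᵃⁱ[ℝ] E') (f : E' → F) (x : E) :
    fderiv ℝ (f ∘ e) x =
      (fderiv ℝ f (e x)).comp (e.linearIsometryEquiv.toContinuousLinearEquiv : E →L[ℝ] E') := by
  have he (y : E) : e y = e.linearIsometryEquiv y + e 0 := by simpa using e.map_vadd 0 y
  rw [show f ∘ e = (fun y ↦ f (y + e 0)) ∘ e.linearIsometryEquiv.toContinuousLinearEquiv from
      funext fun y ↦ congrArg f (he y),
    ContinuousLinearEquiv.comp_right_fderiv, fderiv_comp_add_right, he x]
  rfl

/-- The quantity `∂f/∂|x - q| − iκf` at `x`, which the Sommerfeld radiation condition bounds. -/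
def radiationDefect (κ : ℝ) (q : E) (f : E → ℂ) (x : E) : ℂ :=
  fderiv ℝ f x (‖x - q‖⁻¹ • (x - q)) - Complex.I * κ * f x

/-- The Sommerfeld radiation condition `√|x - q| (∂f/∂|x - q| − iκf)(x) → 0` as `|x| → ∞`, for
radial derivatives taken about the point `q`. -/
def IsRadiating (κ : ℝ) (q : E) (f : E → ℂ) : Prop :=
  Tendsto (fun x ↦ (√‖x - q‖ : ℂ) * radiationDefect κ q f x) (cobounded E) (𝓝 0)

namespace IsRadiating

lemma congr (hf : IsRadiating κ q f) (h : ∀ᶠ x in cobounded E, g =ᶠ[𝓝 x] f) :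
    IsRadiating κ q g :=
  Tendsto.congr' (h.mono fun x hx ↦ by
    simp only [radiationDefect, hx.fderiv_eq, hx.eq_of_nhds]) hf

lemma sub (hf : IsRadiating κ q f) (hg : IsRadiating κ q g)
    (hfd : ∀ᶠ x in cobounded E, DifferentiableAt ℝ f x)
    (hgd : ∀ᶠ x in cobounded E, DifferentiableAt ℝ g x) : IsRadiating κ q (f - g) := by
  refine (sub_zero (0 : ℂ) ▸ Tendsto.sub hf hg).congr' ?_
  filter_upwards [hfd, hgd] with x hfx hgx
  simp only [radiationDefect, fderiv_sub hfx hgx, Pi.sub_apply, sub_apply]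
  ring

lemma comp_affineIsometryEquiv {f : E' → ℂ} (e : E ≃ᵃⁱ[ℝ] E') (hf : IsRadiating κ (e q) f) :
    IsRadiating κ q (f ∘ e) := by
  refine (hf.comp e.antilipschitz.tendsto_cobounded).congr fun x ↦ ?_
  have hsub : e x - e q = e.linearIsometryEquiv (x - q) := (e.map_vsub x q).symm
  simp only [Function.comp_apply, radiationDefect, hsub, LinearIsometryEquiv.norm_map,
    fderiv_comp_affineIsometryEquiv, map_smul, ContinuousLinearMap.comp_apply,
    ContinuousLinearEquiv.coe_coe, LinearIsometryEquiv.coe_toContinuousLinearEquiv]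

end IsRadiating

end Radiation

section RadiationSolution

variable {κ : ℝ} {U : Set R2} {ψ ψ₁ ψ₂ : R2 → ℂ}

lemma IsRadiationSolution.isRadiating (hU : IsCompact Uᶜ)
    (h : IsRadiationSolution κ U ψ) : IsRadiating κ 0 ψ := by
  refine Metric.tendsto_nhds.2 fun ε hε ↦ ?_
  obtain ⟨R, -, hR⟩ := h.2.2 ε hε
  filter_upwards [hU.isBounded, tendsto_norm_cobounded_atTop.eventually_ge_atTop R] with x hx hxR
  simpa [radiationDefect] using hR x (not_not.1 hx) hxR

lemma IsRadiationSolution.isRadiating_sub (h₁ : IsRadiationSolution κ U ψ₁)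
    (h₂ : IsRadiationSolution κ U ψ₂) (hU : IsCompact Uᶜ) : IsRadiating κ 0 (ψ₁ - ψ₂) := by
  have hdiff {ψ} (h : IsRadiationSolution κ U ψ) : ∀ᶠ x in cobounded R2, DifferentiableAt ℝ ψ x :=
    mem_of_superset hU.isBounded fun x hx ↦
      ((h.isHelmholtzOn (isClosed_compl_iff.1 hU.isClosed)).hasFDerivAt
        (not_not.1 hx)).differentiableAt
  exact (h₁.isRadiating hU).sub (h₂.isRadiating hU) (hdiff h₁) (hdiff h₂)

end RadiationSolution

section FourierCoeffOn

variable {a b : ℝ} {f g : ℝ → ℂ}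

lemma fourierCoeffOn_add (hab : a < b) (hf : IntervalIntegrable f volume a b)
    (hg : IntervalIntegrable g volume a b) (n : ℤ) :
    fourierCoeffOn hab (f + g) n = fourierCoeffOn hab f n + fourierCoeffOn hab g n := by
  have hc : Continuous fun x : ℝ ↦ fourier (-n) (x : AddCircle (b - a)) := by fun_prop
  simp only [fourierCoeffOn_eq_integral, Pi.add_apply, smul_eq_mul, mul_add]
  rw [intervalIntegral.integral_add (hf.continuousOn_mul hc.continuousOn)
    (hg.continuousOn_mul hc.continuousOn), smul_add]

lemma fourierCoeffOn_sub (hab : a < b) (hf : IntervalIntegrable f volume a b)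
    (hg : IntervalIntegrable g volume a b) (n : ℤ) :
    fourierCoeffOn hab (f - g) n = fourierCoeffOn hab f n - fourierCoeffOn hab g n := by
  have h := fourierCoeffOn_add (f := f - g) hab (hf.sub hg) hg n
  rw [sub_add_cancel] at h
  exact eq_sub_of_add_eq h.symm

lemma norm_fourierCoeffOn_le (hab : a < b) {C : ℝ} (hf : ∀ t, ‖f t‖ ≤ C) (n : ℤ) :
    ‖fourierCoeffOn hab f n‖ ≤ C := by
  have hab' : 0 < b - a := sub_pos.2 hab
  have h := intervalIntegral.norm_integral_le_of_norm_le_const (a := a) (b := b) (C := C)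
    (f := fun x ↦ fourier (-n) (x : AddCircle (b - a)) • f x) fun t _ ↦ by
      simpa only [norm_smul, fourier_apply, Circle.norm_coe, one_mul] using hf t
  rw [fourierCoeffOn_eq_integral, norm_smul, norm_of_nonneg (by positivity),
    one_div_mul_eq_div, div_le_iff₀ hab']
  rwa [abs_of_pos hab'] at h

lemma fourierCoeffOn_deriv (hab : a < b) {f' : ℝ → ℂ} (hf : ∀ t, HasDerivAt f (f' t) t)
    (hf' : Continuous f') (hfab : f a = f b) (n : ℤ) :
    fourierCoeffOn hab f' n = 2 * π * Complex.I * n / (b - a) * fourierCoeffOn hab f n := by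
  have hi : IntervalIntegrable f' volume a b := hf'.intervalIntegrable a b
  rcases eq_or_ne n 0 with rfl | hn
  · simp [fourierCoeffOn_eq_integral, intervalIntegral.integral_eq_sub_of_hasDerivAt
      (fun t _ ↦ hf t) hi, hfab]
  · have hab' : (b : ℂ) - a ≠ 0 := by exact_mod_cast (sub_pos.2 hab).ne'
    rw [fourierCoeffOn_of_hasDerivAt hab hn (fun t _ ↦ hf t) hi, hfab]
    have := pi_ne_zero
    field_simp
    simp

lemma fourierCoeffOn_conj (hab : a < b) (f : ℝ → ℂ) (n : ℤ) :
    fourierCoeffOn hab (fun t ↦ conj (f t)) n = conj (fourierCoeffOn hab f (-n)) := by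
  simp only [fourierCoeffOn_eq_integral, neg_neg, smul_eq_mul, Complex.real_smul, map_mul,
    Complex.conj_ofReal, intervalIntegral.integral_of_le hab.le, ← integral_conj, ← fourier_neg]

lemma eqOn_zero_of_fourierCoeffOn_eq_zero (hab : a < b) (hf : Continuous f)
    (h : ∀ n, fourierCoeffOn hab f n = 0) : EqOn f 0 (Icc a b) := by
  obtain ⟨C, hC⟩ := (isCompact_Icc (a := a) (b := b)).exists_bound_of_continuousOn hf.continuousOn
  have hL2 : MemLp f 2 (volume.restrict (Ioc a b)) := .of_bound hf.aestronglyMeasurable C <|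
    (ae_restrict_mem measurableSet_Ioc).mono fun t ht ↦ hC t (Ioc_subset_Icc_self ht)
  have hzero : ∫ t in a..b, ‖f t‖ ^ 2 = 0 := by
    simpa [h, (sub_pos.2 hab).ne'] using (tsum_sq_fourierCoeffOn hab hL2).symm
  intro t ht
  by_contra hft
  exact hzero.not_gt <| intervalIntegral.integral_pos hab (hf.norm.pow 2).continuousOn
    (fun _ _ ↦ by positivity) ⟨t, ht, pow_pos (norm_pos_iff.2 hft) 2⟩

lemma tendsto_fourierCoeffOn (hab : a < b) {ι : Type*} {l : Filter ι} {F : ι → ℝ → ℂ}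
    (hF : Tendsto (fun p : ι × ℝ ↦ F p.1 p.2) (l ×ˢ ⊤) (𝓝 0)) (n : ℤ) :
    Tendsto (fun i ↦ fourierCoeffOn hab (F i) n) l (𝓝 0) := by
  refine Metric.tendsto_nhds.2 fun ε hε ↦ ?_
  have h := Metric.tendsto_nhds.1 hF (ε / 2) (half_pos hε)
  rw [← principal_univ, eventually_prod_principal_iff] at h
  refine h.mono fun i hi ↦ ?_
  simp only [mem_univ, true_imp_iff, dist_zero_right] at hi ⊢
  exact (norm_fourierCoeffOn_le hab (fun t ↦ (hi t).le) n).trans_lt (half_lt_self hε)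

lemma hasDerivAt_fourierCoeffOn (hab : a < b) {F F' : ℝ → ℝ → ℂ} {S : Set ℝ} {r₀ : ℝ}
    (hS : S ∈ 𝓝 r₀) (hF : ∀ r ∈ S, Continuous (F r))
    (hF' : ContinuousOn (fun p : ℝ × ℝ ↦ F' p.1 p.2) (S ×ˢ univ))
    (hd : ∀ r ∈ S, ∀ t, HasDerivAt (fun r ↦ F r t) (F' r t) r) (n : ℤ) :
    HasDerivAt (fun r ↦ fourierCoeffOn hab (F r) n) (fourierCoeffOn hab (F' r₀) n) r₀ := by
  obtain ⟨ε, hε, hεS⟩ := Metric.nhds_basis_closedBall.mem_iff.1 hS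
  obtain ⟨C, hC⟩ := ((isCompact_closedBall r₀ ε).prod (isCompact_uIcc (a := a)
    (b := b))).exists_bound_of_continuousOn (hF'.mono (prod_mono hεS (subset_univ _)))
  have hr₀ : r₀ ∈ S := mem_of_mem_nhds hS
  have hF'₀ : Continuous (F' r₀) := continuousOn_univ.1 <|
    hF'.comp (f := fun t : ℝ ↦ (r₀, t)) (by fun_prop) fun t _ ↦ ⟨hr₀, mem_univ t⟩
  have hc : Continuous fun x : ℝ ↦ fourier (-n) (x : AddCircle (b - a)) := by fun_prop
  simp only [fourierCoeffOn_eq_integral]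
  refine .const_smul _ (intervalIntegral.hasDerivAt_integral_of_dominated_loc_of_deriv_le
    (bound := fun _ ↦ C) (Metric.closedBall_mem_nhds r₀ hε)
    (eventually_of_mem hS fun r hr ↦ (hc.smul (hF r hr)).aestronglyMeasurable)
    ((hc.smul (hF r₀ hr₀)).intervalIntegrable _ _) (hc.smul hF'₀).aestronglyMeasurable
    (.of_forall fun t ht r hr ↦ ?_) intervalIntegrable_const
    (.of_forall fun t _ r hr ↦ (hd r (hεS hr) t).const_smul _)).2
  simpa only [norm_smul, fourier_apply, Circle.norm_coe, one_mul] using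
    hC (r, t) ⟨hr, uIoc_subset_uIcc ht⟩

end FourierCoeffOn

lemma fourierCoeffOn_two_pi_deriv {f f' : ℝ → ℂ} (hf : ∀ t, HasDerivAt f (f' t) t)
    (hf' : Continuous f') (hper : Function.Periodic f (2 * π)) (n : ℤ) :
    fourierCoeffOn two_pi_pos f' n = Complex.I * n * fourierCoeffOn two_pi_pos f n := by
  rw [fourierCoeffOn_deriv two_pi_pos hf hf' (by simpa using (hper 0).symm)]
  have := pi_ne_zero
  push_cast
  field_simp
  ring_nf

section Bessel

/-- `f` solves Bessel's equation `f'' + f'/r + (κ² − ν²/r²) f = 0` on `S` with derivative `g`.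
The radial Fourier modes of a solution of the Helmholtz equation have this property. -/
structure IsBesselOn {F : Type*} [NormedAddCommGroup F] [NormedSpace ℝ F] (κ ν : ℝ) (f g : ℝ → F)
    (S : Set ℝ) : Prop where
  hasDerivAt : ∀ r ∈ S, HasDerivAt f (g r) r
  hasDerivAt_deriv : ∀ r ∈ S, HasDerivAt g (-(r⁻¹ • g r) - (κ ^ 2 - ν ^ 2 / r ^ 2) • f r) r

lemma IsBesselOn.mono {F : Type*} [NormedAddCommGroup F] [NormedSpace ℝ F] {κ ν : ℝ} {f g : ℝ → F}
    {S T : Set ℝ} (hf : IsBesselOn κ ν f g T) (hST : S ⊆ T) : IsBesselOn κ ν f g S :=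
  ⟨fun r hr ↦ hf.hasDerivAt r (hST hr), fun r hr ↦ hf.hasDerivAt_deriv r (hST hr)⟩

end Bessel

section Modes

variable {f g : ℂ → ℂ} {c : ℂ} {r : ℝ}

/-- The `n`-th Fourier coefficient of `f` on the circle of radius `r` about `c`. -/
def mode (f : ℂ → ℂ) (c : ℂ) (n : ℤ) (r : ℝ) : ℂ :=
  fourierCoeffOn two_pi_pos (fun t ↦ f (circleMap c r t)) n

/-- The `n`-th Fourier coefficient of the radial derivative of `f` on the circle of radius `r`
about `c`; the outer unit normal of the circle is encoded as `circleMap 0 1`. -/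
def radialMode (f : ℂ → ℂ) (c : ℂ) (n : ℤ) (r : ℝ) : ℂ :=
  fourierCoeffOn two_pi_pos (fun t ↦ fderiv ℝ f (circleMap c r t) (circleMap 0 1 t)) n

lemma hasDerivAt_circleMap_radius (c : ℂ) (r t : ℝ) :
    HasDerivAt (fun ρ ↦ circleMap c ρ t) (circleMap 0 1 t) r := by
  simpa [circleMap] using
    ((hasDerivAt_id r).ofReal_comp.mul_const (Complex.exp (t * Complex.I))).const_add c

lemma continuousAt_comp_circleMap_prod {F : Type*} [TopologicalSpace F] {h : ℂ → F} {p : ℝ × ℝ}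
    (hh : ContinuousAt h (circleMap c p.1 p.2)) :
    ContinuousAt (fun p : ℝ × ℝ ↦ h (circleMap c p.1 p.2)) p := by
  have hc : Continuous fun p : ℝ × ℝ ↦ circleMap c p.1 p.2 := by
    unfold circleMap
    fun_prop
  exact hh.comp_of_eq hc.continuousAt rfl

lemma continuous_comp_circleMap {F : Type*} [TopologicalSpace F] {h : ℂ → F}
    (hh : ∀ t, ContinuousAt h (circleMap c r t)) : Continuous fun t ↦ h (circleMap c r t) :=
  continuous_iff_continuousAt.2 fun t ↦
    (hh t).comp_of_eq (continuous_circleMap c r).continuousAt rfl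

lemma hasDerivAt_circleMap_angle (c : ℂ) (r t : ℝ) :
    HasDerivAt (circleMap c r) (r • (Complex.I * circleMap 0 1 t)) t := by
  refine (hasDerivAt_circleMap c r t).congr_deriv ?_
  simp only [circleMap, zero_add, Complex.ofReal_one, one_mul, Complex.real_smul]
  ring

lemma hasDerivAt_comp_circleMap_radius {F : Type*} [NormedAddCommGroup F] [NormedSpace ℝ F]
    {h : ℂ → F} {t : ℝ} (hh : DifferentiableAt ℝ h (circleMap c r t)) :
    HasDerivAt (fun ρ ↦ h (circleMap c ρ t)) (fderiv ℝ h (circleMap c r t) (circleMap 0 1 t)) r :=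
  hh.hasFDerivAt.comp_hasDerivAt r (hasDerivAt_circleMap_radius c r t)

lemma hasDerivAt_comp_circleMap_angle {F : Type*} [NormedAddCommGroup F] [NormedSpace ℝ F]
    {h : ℂ → F} {t : ℝ} (hh : DifferentiableAt ℝ h (circleMap c r t)) :
    HasDerivAt (fun t ↦ h (circleMap c r t))
      (r • fderiv ℝ h (circleMap c r t) (Complex.I * circleMap 0 1 t)) t :=
  map_smul (fderiv ℝ h (circleMap c r t)) r _ ▸
    hh.hasFDerivAt.comp_hasDerivAt t (hasDerivAt_circleMap_angle c r t)

lemma continuous_fderiv_circleMap (hf : ∀ t, ContDiffAt ℝ 1 f (circleMap c r t)) :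
    Continuous fun t ↦ fderiv ℝ f (circleMap c r t) :=
  continuous_comp_circleMap fun t ↦ ((hf t).fderiv_right (m := 0) (by norm_num)).continuousAt

lemma continuous_fderiv_fderiv_circleMap (hf : ∀ t, ContDiffAt ℝ 2 f (circleMap c r t))
    {v : ℝ → ℂ} (hv : Continuous v) :
    Continuous fun t ↦ fderiv ℝ (fderiv ℝ f) (circleMap c r t) (v t) (v t) := by
  have hc : Continuous fun t ↦ fderiv ℝ (fderiv ℝ f) (circleMap c r t) :=
    continuous_comp_circleMap fun t ↦ (((hf t).fderiv_right (m := 1) (by norm_num)).fderiv_right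
      (m := 0) (by norm_num)).continuousAt
  exact (hc.clm_apply hv).clm_apply hv

lemma hasDerivAt_I_mul_circleMap_angle (t : ℝ) :
    HasDerivAt (fun t ↦ Complex.I * circleMap 0 1 t) (-circleMap 0 1 t) t := by
  refine ((hasDerivAt_circleMap 0 1 t).const_mul Complex.I).congr_deriv ?_
  rw [mul_left_comm, Complex.I_mul_I, mul_neg_one]

lemma hasDerivAt_mode (hf : ∀ᶠ ρ in 𝓝 r, ∀ t, ContDiffAt ℝ 1 f (circleMap c ρ t)) (n : ℤ) :
    HasDerivAt (mode f c n) (radialMode f c n r) r := by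
  refine hasDerivAt_fourierCoeffOn two_pi_pos
    (F' := fun ρ t ↦ fderiv ℝ f (circleMap c ρ t) (circleMap 0 1 t)) hf
    (fun ρ hρ ↦ continuous_comp_circleMap fun t ↦ (hρ t).continuousAt) (fun p hp ↦ ?_)
    (fun ρ hρ t ↦ ?_) n
  · have hfd := continuousAt_comp_circleMap_prod
      ((hp.1 p.2).fderiv_right (m := 0) (by norm_num)).continuousAt
    have hu : Continuous fun p : ℝ × ℝ ↦ circleMap 0 1 p.2 := by fun_prop
    exact (hfd.clm_apply hu.continuousAt).continuousWithinAt
  · exact hasDerivAt_comp_circleMap_radius ((hρ t).differentiableAt one_ne_zero)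

lemma hasDerivAt_radialMode (hf : ∀ᶠ ρ in 𝓝 r, ∀ t, ContDiffAt ℝ 2 f (circleMap c ρ t)) (n : ℤ) :
    HasDerivAt (radialMode f c n) (fourierCoeffOn two_pi_pos (fun t ↦
      fderiv ℝ (fderiv ℝ f) (circleMap c r t) (circleMap 0 1 t) (circleMap 0 1 t)) n) r := by
  have hf' (z : ℂ) (hz : ContDiffAt ℝ 2 f z) : ContDiffAt ℝ 1 (fderiv ℝ f) z :=
    hz.fderiv_right (by norm_num)
  refine hasDerivAt_fourierCoeffOn two_pi_pos
    (F' := fun ρ t ↦ fderiv ℝ (fderiv ℝ f) (circleMap c ρ t) (circleMap 0 1 t) (circleMap 0 1 t)) hf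
    (fun ρ hρ ↦ (continuous_comp_circleMap fun t ↦ (hf' _ (hρ t)).continuousAt).clm_apply
      (continuous_circleMap 0 1)) (fun p hp ↦ ?_) (fun ρ hρ t ↦ ?_) n
  · have hfd := continuousAt_comp_circleMap_prod
      ((hf' _ (hp.1 p.2)).fderiv_right (m := 0) (by norm_num)).continuousAt
    have hu : Continuous fun p : ℝ × ℝ ↦ circleMap 0 1 p.2 := by fun_prop
    exact ((hfd.clm_apply hu.continuousAt).clm_apply hu.continuousAt).continuousWithinAt
  · exact ((hasDerivAt_comp_circleMap_radius ((hf' _ (hρ t)).differentiableAt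
      one_ne_zero)).clm_apply (hasDerivAt_const ρ _)).congr_deriv (by simp)

lemma sq_mul_fourierCoeffOn_fderiv_fderiv (hf : ∀ t, ContDiffAt ℝ 2 f (circleMap c r t)) (n : ℤ) :
    r ^ 2 * fourierCoeffOn two_pi_pos (fun t ↦ fderiv ℝ (fderiv ℝ f) (circleMap c r t)
      (Complex.I * circleMap 0 1 t) (Complex.I * circleMap 0 1 t)) n =
      r * radialMode f c n r - n ^ 2 * mode f c n r := by
  set u : ℝ → ℂ := circleMap 0 1
  set P : ℝ → ℂ := fun t ↦ fderiv ℝ f (circleMap c r t) (Complex.I * u t) with hP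
  set Q : ℝ → ℂ := fun t ↦
    fderiv ℝ (fderiv ℝ f) (circleMap c r t) (Complex.I * u t) (Complex.I * u t)
  set D : ℝ → ℂ := fun t ↦ fderiv ℝ f (circleMap c r t) (u t)
  have hf' (t : ℝ) : ContDiffAt ℝ 1 (fderiv ℝ f) (circleMap c r t) :=
    (hf t).fderiv_right (by norm_num)
  have hfz (t : ℝ) : HasDerivAt (fun t ↦ f (circleMap c r t)) (r * P t) t :=
    hasDerivAt_comp_circleMap_angle ((hf t).differentiableAt two_ne_zero)
  have hPd (t : ℝ) : HasDerivAt P (r * Q t + -1 * D t) t := by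
    refine ((hasDerivAt_comp_circleMap_angle ((hf' t).differentiableAt one_ne_zero)).clm_apply
      (hasDerivAt_I_mul_circleMap_angle t)).congr_deriv ?_
    simp [Q, D, u]
  have hDc : Continuous D :=
    (continuous_comp_circleMap fun t ↦ (hf' t).continuousAt).clm_apply (continuous_circleMap 0 1)
  have hQc : Continuous Q :=
    continuous_fderiv_fderiv_circleMap hf ((continuous_circleMap 0 1).const_mul _)
  have hPc : Continuous P := continuous_iff_continuousAt.2 fun t ↦ (hPd t).continuousAt
  have hcP := fourierCoeffOn_two_pi_deriv hfz (by fun_prop)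
    ((periodic_circleMap c r).comp f) n
  have hcQ := fourierCoeffOn_two_pi_deriv hPd (by fun_prop) (fun t ↦ by
    simp only [hP, u, periodic_circleMap c r t, periodic_circleMap 0 1 t]) n
  have hadd := fourierCoeffOn_add two_pi_pos ((hQc.const_mul (r : ℂ)).intervalIntegrable 0 (2 * π))
    ((hDc.const_mul (-1 : ℂ)).intervalIntegrable 0 (2 * π)) n
  simp only [fourierCoeffOn.const_mul, Pi.add_def] at hcP hcQ hadd
  rw [hadd] at hcQ
  change r ^ 2 * fourierCoeffOn _ Q n = r * fourierCoeffOn _ D n - n ^ 2 * fourierCoeffOn _ _ n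
  linear_combination (r : ℂ) * hcQ + Complex.I * n * hcP + n ^ 2 *
    fourierCoeffOn two_pi_pos (fun t ↦ f (circleMap c r t)) n * Complex.I_sq

lemma isBesselOn_mode {κ : ℝ} {S : Set ℝ} {V : Set ℂ} (hS : IsOpen S) (h0 : 0 ∉ S)
    (hf : IsHelmholtzOn κ f V) (hV : ∀ r ∈ S, ∀ t, circleMap c r t ∈ V) (n : ℤ) :
    IsBesselOn κ n (mode f c n) (radialMode f c n) S where
  hasDerivAt r hr := hasDerivAt_mode (eventually_of_mem (hS.mem_nhds hr) fun ρ hρ t ↦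
    (hf _ (hV ρ hρ t)).1.of_le one_le_two) n
  hasDerivAt_deriv r hr := by
    have hf2 : ∀ ρ ∈ S, ∀ t, ContDiffAt ℝ 2 f (circleMap c ρ t) := fun ρ hρ t ↦ (hf _ (hV ρ hρ t)).1
    refine (hasDerivAt_radialMode (eventually_of_mem (hS.mem_nhds hr) hf2) n).congr_deriv ?_
    set Q : ℝ → ℂ := fun t ↦ fderiv ℝ (fderiv ℝ f) (circleMap c r t)
      (Complex.I * circleMap 0 1 t) (Complex.I * circleMap 0 1 t) with hQ
    have hpolar : (fun t ↦ fderiv ℝ (fderiv ℝ f) (circleMap c r t) (circleMap 0 1 t)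
        (circleMap 0 1 t)) = (fun t ↦ -κ ^ 2 * f (circleMap c r t)) + fun t ↦ -1 * Q t := by
      funext t
      have := hf.add_mul_I_eq (hV r hr t) (u := circleMap 0 1 t) (by simp)
      simp only [Complex.real_smul] at this
      push_cast at this
      simp only [Pi.add_apply, ← this, hQ]
      ring
    have hQc : Continuous Q :=
      continuous_fderiv_fderiv_circleMap (hf2 r hr) ((continuous_circleMap 0 1).const_mul _)
    have hfc : Continuous fun t ↦ f (circleMap c r t) :=
      continuous_comp_circleMap fun t ↦ (hf2 r hr t).continuousAt
    have hang := sq_mul_fourierCoeffOn_fderiv_fderiv (hf2 r hr) n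
    rw [hpolar, fourierCoeffOn_add two_pi_pos ((hfc.const_mul _).intervalIntegrable _ _)
      ((hQc.const_mul _).intervalIntegrable _ _), fourierCoeffOn.const_mul,
      fourierCoeffOn.const_mul]
    have hr0 : (r : ℂ) ≠ 0 := Complex.ofReal_ne_zero.2 (ne_of_mem_of_not_mem hr h0)
    change _ * mode f c n r + _ = _
    simp only [Complex.real_smul]
    push_cast
    field_simp
    linear_combination -hang

lemma mode_conj (f : ℂ → ℂ) (c : ℂ) (n : ℤ) (r : ℝ) :
    mode (fun z ↦ conj (f z)) c n r = conj (mode f c (-n) r) :=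
  fourierCoeffOn_conj two_pi_pos _ n

lemma eq_zero_of_mode_eq_zero (hf : ∀ t, ContinuousAt f (circleMap c r t))
    (h : ∀ n, mode f c n r = 0) {z : ℂ} (hz : z ∈ Metric.sphere c |r|) : f z = 0 := by
  rw [← image_circleMap_Ioc] at hz
  obtain ⟨t, ht, rfl⟩ := hz
  exact eqOn_zero_of_fourierCoeffOn_eq_zero two_pi_pos (continuous_comp_circleMap hf) h
    (Ioc_subset_Icc_self ht)

end Modes

lemma eq_zero_of_deriv_ge_of_tendsto_zero {E E' : ℝ → ℝ} {R C : ℝ} (hR : 0 ≤ R)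
    (hE : ∀ r ∈ Ioi R, HasDerivAt E (E' r) r) (h0 : ∀ r ∈ Ioi R, 0 ≤ E r)
    (hE' : ∀ r ∈ Ioi R, -(C / r ^ 2 * E r) ≤ E' r) (hlim : Tendsto E atTop (𝓝 0)) :
    EqOn E 0 (Ioi R) := by
  -- `exp (-C / r)` is an integrating factor, which makes `E` increasing
  set F : ℝ → ℝ := fun r ↦ E r * exp (-(C * r⁻¹))
  have hd : ∀ r ∈ Ioi R, HasDerivAt F ((E' r + C / r ^ 2 * E r) * exp (-(C * r⁻¹))) r := by
    intro r hr
    have hr0 : r ≠ 0 := (hR.trans_lt hr).ne'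
    refine ((hE r hr).mul (((hasDerivAt_inv hr0).const_mul C).fun_neg.exp)).congr_deriv ?_
    ring
  have hmono : MonotoneOn F (Ioi R) := by
    refine monotoneOn_of_deriv_nonneg (convex_Ioi R)
      (fun r hr ↦ (hd r hr).continuousAt.continuousWithinAt)
      (fun r hr ↦ (hd r (interior_subset hr)).differentiableAt.differentiableWithinAt)
      fun r hr ↦ ?_
    rw [(hd r (interior_subset hr)).deriv]
    exact mul_nonneg (neg_le_iff_add_nonneg.1 (hE' r (interior_subset hr))) (exp_pos _).le
  have hF : Tendsto F atTop (𝓝 0) := by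
    simpa [F] using hlim.mul
      ((continuous_exp.tendsto _).comp ((tendsto_inv_atTop_zero.const_mul C).neg))
  intro r hr
  have hle : F r ≤ 0 := ge_of_tendsto hF <| (eventually_ge_atTop r).mono fun s hs ↦
    hmono hr (lt_of_lt_of_le (mem_Ioi.1 hr) hs) hs
  exact (nonpos_of_mul_nonpos_left hle (exp_pos _)).antisymm (h0 r hr)

section Bessel

variable {F : Type*} [NormedAddCommGroup F] {κ ν R : ℝ}

lemma eqOn_zero_of_hasDerivAt_of_tendsto_zero [InnerProductSpace ℝ F] {u w : ℝ → F} {c : ℝ}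
    (hκ : 0 < κ) (hR : 0 ≤ R) (hu : ∀ r ∈ Ioi R, HasDerivAt u (w r) r)
    (hw : ∀ r ∈ Ioi R, HasDerivAt w ((-κ ^ 2 + c / r ^ 2) • u r) r)
    (hu0 : Tendsto u atTop (𝓝 0)) (hw0 : Tendsto w atTop (𝓝 0)) : EqOn u 0 (Ioi R) := by
  -- the energy `|w|² + κ²|u|²` is conserved up to a term of size `O(r⁻²)`
  have henergy (r : ℝ) : -(|c| / κ / r ^ 2 * (‖w r‖ ^ 2 + κ ^ 2 * ‖u r‖ ^ 2)) ≤
      2 * inner ℝ (w r) ((-κ ^ 2 + c / r ^ 2) • u r) + κ ^ 2 * (2 * inner ℝ (u r) (w r)) := by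
    have hinner : |2 * κ * inner ℝ (w r) (u r)| ≤ ‖w r‖ ^ 2 + κ ^ 2 * ‖u r‖ ^ 2 := by
      rw [abs_mul, abs_of_pos (by positivity)]
      nlinarith [sq_nonneg (‖w r‖ - κ * ‖u r‖), abs_real_inner_le_norm (w r) (u r)]
    calc
      _ ≤ -(|c| / κ / r ^ 2 * |2 * κ * inner ℝ (w r) (u r)|) := by gcongr
      _ = -|2 * (c / r ^ 2) * inner ℝ (w r) (u r)| := by
        simp only [abs_mul, abs_div, abs_of_pos hκ, abs_pow, sq_abs]
        field_simp
      _ ≤ 2 * (c / r ^ 2) * inner ℝ (w r) (u r) := neg_abs_le _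
      _ = _ := by
        rw [inner_smul_right, real_inner_comm (w r) (u r)]
        ring
  have hE := eq_zero_of_deriv_ge_of_tendsto_zero (E := fun r ↦ ‖w r‖ ^ 2 + κ ^ 2 * ‖u r‖ ^ 2) hR
    (fun r hr ↦ (hw r hr).norm_sq.add ((hu r hr).norm_sq.const_mul (κ ^ 2)))
    (fun r _ ↦ by positivity) (fun r _ ↦ henergy r)
    (by simpa using (hw0.norm.pow 2).add ((hu0.norm.pow 2).const_mul (κ ^ 2)))
  intro r hr
  have := (add_eq_zero_iff_of_nonneg (by positivity) (by positivity)).1 (hE hr)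
  simpa [hκ.ne'] using this.2

namespace IsBesselOn

lemma eqOn_zero_of_eq_zero [NormedSpace ℝ F] {f g : ℝ → F} {a b : ℝ}
    (hf : IsBesselOn κ ν f g (Icc a b)) (ha : 0 < a) (hfa : f a = 0) (hga : g a = 0) :
    EqOn f 0 (Icc a b) := by
  have hpos : ∀ r ∈ Icc a b, r ≠ 0 := fun r hr ↦ (ha.trans_le hr.1).ne'
  obtain ⟨A, hA⟩ := isCompact_Icc.exists_bound_of_continuousOn
    (continuousOn_inv₀.mono hpos : ContinuousOn (fun r : ℝ ↦ r⁻¹) (Icc a b))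
  obtain ⟨B, hB⟩ := isCompact_Icc.exists_bound_of_continuousOn
    (show ContinuousOn (fun r : ℝ ↦ κ ^ 2 - ν ^ 2 / r ^ 2) (Icc a b) by fun_prop (disch := aesop))
  have hd : ∀ r ∈ Icc a b, HasDerivAt (fun r ↦ (f r, g r))
      (g r, -(r⁻¹ • g r) - (κ ^ 2 - ν ^ 2 / r ^ 2) • f r) r :=
    fun r hr ↦ (hf.hasDerivAt r hr).prodMk (hf.hasDerivAt_deriv r hr)
  intro r hr
  refine congrArg Prod.fst (eq_zero_of_abs_deriv_le_mul_abs_self_of_eq_zero_right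
    (K := max 1 (A + B)) (fun s hs ↦ (hd s hs).continuousAt.continuousWithinAt)
    (fun s hs ↦ (hd s (Ico_subset_Icc_self hs)).hasDerivWithinAt) (Prod.ext hfa hga)
    (fun s hs ↦ ?_) r hr)
  have hs := Ico_subset_Icc_self hs
  refine max_le ?_ ?_
  · calc ‖g s‖ ≤ 1 * ‖(f s, g s)‖ := by simp
      _ ≤ _ := by gcongr; exact le_max_left _ _
  · calc ‖-(s⁻¹ • g s) - (κ ^ 2 - ν ^ 2 / s ^ 2) • f s‖
        ≤ ‖s⁻¹‖ * ‖g s‖ + ‖κ ^ 2 - ν ^ 2 / s ^ 2‖ * ‖f s‖ := by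
          simpa only [norm_neg, norm_smul] using
            norm_sub_le (-(s⁻¹ • g s)) ((κ ^ 2 - ν ^ 2 / s ^ 2) • f s)
      _ ≤ A * ‖(f s, g s)‖ + B * ‖(f s, g s)‖ := by
          have hA' := (norm_nonneg _).trans (hA s hs)
          have hB' := (norm_nonneg _).trans (hB s hs)
          gcongr
          exacts [hA s hs, norm_snd_le (f s, g s), hB s hs, norm_fst_le (f s, g s)]
      _ ≤ _ := by rw [← add_mul]; gcongr; exact le_max_right _ _

lemma hasDerivAt_sqrt_smul [NormedSpace ℝ F] {f g : ℝ → F} (hf : IsBesselOn κ ν f g (Ioi R))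
    (hR : 0 ≤ R) {r : ℝ} (hr : r ∈ Ioi R) :
    HasDerivAt (fun r ↦ √r • f r) (√r • g r + (2 * r)⁻¹ • √r • f r) r := by
  have hr0 : 0 < r := hR.trans_lt hr
  refine ((hasDerivAt_sqrt hr0.ne').smul (hf.hasDerivAt r hr)).congr_deriv ?_
  rw [smul_smul]
  congr 2
  field_simp
  rw [sq_sqrt hr0.le]

lemma hasDerivAt_deriv_sqrt_smul [NormedSpace ℝ F] {f g : ℝ → F}
    (hf : IsBesselOn κ ν f g (Ioi R)) (hR : 0 ≤ R) {r : ℝ} (hr : r ∈ Ioi R) :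
    HasDerivAt (fun r ↦ √r • g r + (2 * r)⁻¹ • √r • f r)
      ((-κ ^ 2 + (ν ^ 2 - 1 / 4) / r ^ 2) • √r • f r) r := by
  have hr0 : 0 < r := hR.trans_lt hr
  have hinv : HasDerivAt (fun r : ℝ ↦ (2 * r)⁻¹) (-(2 * r ^ 2)⁻¹) r := by
    refine (((hasDerivAt_id r).const_mul 2).inv (by positivity)).congr_deriv ?_
    simp only [id]
    field_simp
  refine (((hasDerivAt_sqrt hr0.ne').smul (hf.hasDerivAt_deriv r hr)).add
    (hinv.smul (hf.hasDerivAt_sqrt_smul hR hr))).congr_deriv ?_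
  match_scalars
  · field_simp
    rw [sq_sqrt hr0.le]
    ring
  · field_simp
    ring

lemma eqOn_zero_of_tendsto_zero [InnerProductSpace ℝ F] {f g : ℝ → F}
    (hf : IsBesselOn κ ν f g (Ioi R)) (hκ : 0 < κ) (hR : 0 ≤ R)
    (hf0 : Tendsto (fun r ↦ √r • f r) atTop (𝓝 0)) (hg0 : Tendsto (fun r ↦ √r • g r) atTop (𝓝 0)) :
    EqOn f 0 (Ioi R) := by
  have hinv : Tendsto (fun r : ℝ ↦ (2 * r)⁻¹) atTop (𝓝 0) :=
    tendsto_inv_atTop_zero.comp (tendsto_id.const_mul_atTop two_pos)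
  have h := eqOn_zero_of_hasDerivAt_of_tendsto_zero hκ hR
    (fun r hr ↦ hf.hasDerivAt_sqrt_smul hR hr) (fun r hr ↦ hf.hasDerivAt_deriv_sqrt_smul hR hr)
    hf0 (by simpa using hg0.add (hinv.smul hf0))
  exact fun r hr ↦ (smul_eq_zero.1 (h hr)).resolve_left (sqrt_pos.2 (hR.trans_lt hr)).ne'

lemma hasDerivAt_wronskian [InnerProductSpace ℝ F] {f g f₁ g₁ : ℝ → F} {S : Set ℝ} {r : ℝ}
    (hf : IsBesselOn κ ν f g S) (hf₁ : IsBesselOn κ ν f₁ g₁ S) (hr : r ∈ S) (hr0 : r ≠ 0) :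
    HasDerivAt (fun r ↦ r * (inner ℝ (f r) (g₁ r) - inner ℝ (g r) (f₁ r))) 0 r := by
  refine ((hasDerivAt_id r).mul (((hf.hasDerivAt r hr).inner ℝ (hf₁.hasDerivAt_deriv r hr)).sub
    ((hf.hasDerivAt_deriv r hr).inner ℝ (hf₁.hasDerivAt r hr)))).congr_deriv ?_
  simp only [inner_sub_left, inner_sub_right, inner_neg_left, inner_neg_right, inner_smul_left,
    inner_smul_right, conj_trivial, id, Pi.sub_apply]
  field_simp
  ring

lemma const_mul {f g : ℝ → ℂ} {S : Set ℝ} (hf : IsBesselOn κ ν f g S) (c : ℂ) :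
    IsBesselOn κ ν (fun r ↦ c * f r) (fun r ↦ c * g r) S where
  hasDerivAt r hr := (hf.hasDerivAt r hr).const_mul c
  hasDerivAt_deriv r hr := ((hf.hasDerivAt_deriv r hr).const_mul c).congr_deriv (by
    simp only [mul_sub, mul_neg, mul_smul_comm])

lemma eqOn_zero_of_radiating_of_conj_radiating {f g : ℝ → ℂ} (hf : IsBesselOn κ ν f g (Ioi R))
    (hκ : 0 < κ) (hR : 0 ≤ R)
    (hrad : Tendsto (fun r ↦ (√r : ℂ) * (g r - Complex.I * κ * f r)) atTop (𝓝 0))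
    (hconj : Tendsto (fun r ↦ (√r : ℂ) * (g r + Complex.I * κ * f r)) atTop (𝓝 0)) :
    EqOn f 0 (Ioi R) := by
  have hκ' : (κ : ℂ) ≠ 0 := by exact_mod_cast hκ.ne'
  refine hf.eqOn_zero_of_tendsto_zero hκ hR ?_ ?_
  · refine Tendsto.congr (fun r ↦ ?_)
      (by simpa using (hconj.sub hrad).const_mul (1 / (2 * Complex.I * κ)))
    rw [Complex.real_smul]
    field_simp
    linear_combination -2 * (√r : ℂ) * κ * f r * Complex.I_sq
  · refine Tendsto.congr (fun r ↦ ?_) (by simpa using (hconj.add hrad).const_mul (1 / 2 : ℂ))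
    rw [Complex.real_smul]
    ring

lemma eqOn_zero_of_radiating_of_flux_eq_zero {f g : ℝ → ℂ} (hf : IsBesselOn κ ν f g (Ioi R))
    (hκ : 0 < κ) (hR : 0 ≤ R)
    (hrad : Tendsto (fun r ↦ (√r : ℂ) * (g r - Complex.I * κ * f r)) atTop (𝓝 0))
    (hflux : ∀ r ∈ Ioi R, inner ℝ (g r) (Complex.I * f r) = 0) : EqOn f 0 (Ioi R) := by
  -- without flux, `|f' - iκf|² = |f'|² + κ²|f|² = |f' + iκf|²`
  refine hf.eqOn_zero_of_radiating_of_conj_radiating hκ hR hrad <|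
    squeeze_zero_norm' ((eventually_gt_atTop R).mono fun r hr ↦ ?_)
      (tendsto_zero_iff_norm_tendsto_zero.1 hrad)
  have hinner : inner ℝ (Complex.I * κ * f r) (g r) = 0 := by
    rw [real_inner_comm,
      show Complex.I * κ * f r = κ • (Complex.I * f r) by rw [Complex.real_smul]; ring,
      inner_smul_right, hflux r hr, mul_zero]
  rw [norm_mul, norm_mul, norm_sub_eq_norm_add hinner]

end IsBesselOn

end Bessel

section UniqueContinuation

variable {κ : ℝ} {f : ℂ → ℂ} {U : Set ℂ}

lemma mode_eq_zero_and_radialMode_eq_zero {c : ℂ} {r : ℝ}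
    (h : ∀ z ∈ Metric.sphere c |r|, f =ᶠ[𝓝 z] 0) (n : ℤ) :
    mode f c n r = 0 ∧ radialMode f c n r = 0 := by
  have hf (t : ℝ) : f (circleMap c r t) = 0 := (h _ (circleMap_mem_sphere' c r t)).eq_of_nhds
  have hf' (t : ℝ) : fderiv ℝ f (circleMap c r t) = 0 := by
    rw [(h _ (circleMap_mem_sphere' c r t)).fderiv_eq, fderiv_zero, Pi.zero_apply]
  simp [mode, radialMode, hf, hf', fourierCoeffOn_eq_integral]

lemma IsHelmholtzOn.eqOn_zero_ball {c : ℂ} {ρ : ℝ} (hf : IsHelmholtzOn κ f (Metric.ball c ρ))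
    (h : f =ᶠ[𝓝 c] 0) : EqOn f 0 (Metric.ball c ρ) := by
  obtain ⟨ε, hε, hεf⟩ := Metric.eventually_nhds_iff_ball.1 h.eventuallyEq_nhds
  intro z hz
  by_cases hzε : z ∈ Metric.ball c ε
  · exact (hεf z hzε).eq_of_nhds
  have hcircle {r : ℝ} (hr : r ∈ Ioo 0 ρ) (t : ℝ) : circleMap c r t ∈ Metric.ball c ρ :=
    Metric.sphere_subset_ball hr.2 (circleMap_mem_sphere c hr.1.le t)
  have hsub : Icc (ε / 2) (dist z c) ⊆ Ioo 0 ρ := fun r hr ↦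
    ⟨(half_pos hε).trans_le hr.1, hr.2.trans_lt hz⟩
  have hεz : ε / 2 ≤ dist z c := (half_le_self hε.le).trans (not_lt.1 hzε)
  have hlast : dist z c ∈ Icc (ε / 2) (dist z c) := ⟨hεz, le_rfl⟩
  refine eq_zero_of_mode_eq_zero (r := dist z c) (c := c)
    (fun t ↦ (hf _ (hcircle (hsub hlast) t)).1.continuousAt) (fun n ↦ ?_)
    (by rw [Metric.mem_sphere, abs_of_nonneg dist_nonneg])
  obtain ⟨h0, h0'⟩ := mode_eq_zero_and_radialMode_eq_zero (c := c) (r := ε / 2)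
    (fun w hw ↦ hεf w (Metric.sphere_subset_ball
      ((abs_of_pos (half_pos hε)).trans_lt (half_lt_self hε)) hw)) n
  exact ((isBesselOn_mode isOpen_Ioo (fun h ↦ h.1.false) hf (fun r hr t ↦ hcircle hr t) n).mono
    hsub).eqOn_zero_of_eq_zero (half_pos hε) h0 h0' hlast

lemma IsHelmholtzOn.eqOn_zero_of_eventuallyEq_zero (hf : IsHelmholtzOn κ f U) (hU : IsOpen U)
    (hUc : IsPreconnected U) {c : ℂ} (hc : c ∈ U) (h : f =ᶠ[𝓝 c] 0) : EqOn f 0 U := by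
  have hsub : U ⊆ {z | f =ᶠ[𝓝 z] 0} := by
    refine hUc.subset_of_closure_inter_subset isOpen_setOfPred_eventually_nhds ⟨c, hc, h⟩ ?_
    rintro z ⟨hzc, hzU⟩
    obtain ⟨ρ, hρ, hρU⟩ := Metric.isOpen_iff.1 hU z hzU
    obtain ⟨w, hw, hzw⟩ := Metric.mem_closure_iff.1 hzc (ρ / 2) (half_pos hρ)
    have hball : Metric.ball w (ρ / 2) ⊆ U :=
      (Metric.ball_subset_ball' (by rw [dist_comm]; linarith)).trans hρU
    exact ((hf.mono hball).eqOn_zero_ball hw).eventuallyEq_of_mem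
      (Metric.isOpen_ball.mem_nhds hzw)
  exact fun z hz ↦ (hsub hz).eq_of_nhds

lemma eq_zero_of_apply_one_of_apply_I {F : Type*} [NormedAddCommGroup F] [NormedSpace ℝ F]
    {l : ℂ →L[ℝ] F} (h1 : l 1 = 0) (hI : l Complex.I = 0) : l = 0 :=
  ContinuousLinearMap.coe_injective <| Complex.basisOneI.ext fun i ↦ by fin_cases i <;> simpa

lemma fderiv_one_eq_zero_of_eq_zero_of_im_eq_zero {F : Type*} [NormedAddCommGroup F]
    [NormedSpace ℝ F] {h : ℂ → F} (hU : IsOpen U) (h0 : ∀ z ∈ U, z.im = 0 → h z = 0) {z : ℂ}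
    (hz : z ∈ U) (hz0 : z.im = 0) (hd : DifferentiableAt ℝ h z) : fderiv ℝ h z 1 = 0 := by
  have hline : HasDerivAt (fun t : ℝ ↦ z + t) 1 0 :=
    (Complex.ofRealCLM.hasDerivAt (x := 0)).const_add z
  have hcont : Tendsto (fun t : ℝ ↦ z + t) (𝓝 0) (𝓝 z) := by
    simpa using hline.continuousAt.tendsto
  have hzero : (fun t : ℝ ↦ h (z + t)) =ᶠ[𝓝 0] fun _ ↦ 0 :=
    (hcont.eventually (hU.mem_nhds hz)).mono fun t ht ↦ h0 _ ht (by simp [hz0])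
  exact ((hd.hasFDerivAt.comp_hasDerivAt_of_eq 0 hline (by simp)).congr_of_eventuallyEq
    hzero.symm).unique (hasDerivAt_const _ _)

lemma IsHelmholtzOn.eqOn_zero_of_cauchy_data (hf : IsHelmholtzOn κ f U) (hU : IsOpen U)
    (hUc : IsPreconnected U) {x : ℂ} (hx : x ∈ U) (hx0 : x.im = 0)
    (h0 : ∀ z ∈ U, z.im = 0 → f z = 0) (h1 : ∀ z ∈ U, z.im = 0 → fderiv ℝ f z = 0) :
    EqOn f 0 U := by
  have h2 (z : ℂ) (hz : z ∈ U) (hz0 : z.im = 0) : fderiv ℝ (fderiv ℝ f) z = 0 := by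
    have hone := fderiv_one_eq_zero_of_eq_zero_of_im_eq_zero hU h1 hz hz0
      (hf.hasFDerivAt_fderiv hz).differentiableAt
    have hsymm : fderiv ℝ (fderiv ℝ f) z Complex.I 1 = 0 := by
      rw [((hf z hz).1.isSymmSndFDerivAt (by simp)).eq Complex.I 1, hone, zero_apply]
    have hI : fderiv ℝ (fderiv ℝ f) z Complex.I Complex.I = 0 := by
      simpa [hone, h0 z hz hz0] using hf.add_mul_I_eq hz (u := 1) norm_one
    exact eq_zero_of_apply_one_of_apply_I hone (eq_zero_of_apply_one_of_apply_I hsymm hI)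
  have hind : IsHelmholtzOn κ ({z | 0 < z.im}.indicator f) U :=
    hf.indicator hU fun z ⟨hz, hzf⟩ ↦ by
      rw [Complex.frontier_setOfPred_lt_im] at hzf
      exact ⟨h0 z hz hzf, h1 z hz hzf, h2 z hz hzf⟩
  obtain ⟨y, hy, hy'⟩ := mem_closure_iff.1
    (show x ∈ closure {z | z.im < 0} by simp [hx0]) U hU hx
  obtain ⟨w, hw, hw'⟩ := mem_closure_iff.1
    (show x ∈ closure {z | 0 < z.im} by simp [hx0]) U hU hx
  have hzero := hind.eqOn_zero_of_eventuallyEq_zero hU hUc hy <|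
    ((isOpen_Iio.preimage Complex.continuous_im).eventually_mem hy').mono fun z hz ↦
      indicator_of_notMem (s := {z : ℂ | 0 < z.im}) (fun h : 0 < z.im ↦ lt_asymm h hz) f
  refine hf.eqOn_zero_of_eventuallyEq_zero hU hUc hw ?_
  filter_upwards [hU.mem_nhds hw, (isOpen_Ioi.preimage Complex.continuous_im).mem_nhds hw']
    with z hzU hz
  rw [← hzero hzU, indicator_of_mem (s := {z : ℂ | 0 < z.im}) hz]

lemma IsHelmholtzOn.eqOn_zero_of_comp_conj_eq (hf : IsHelmholtzOn κ f U) (hU : IsOpen U)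
    (hUc : IsPreconnected U) {x : ℂ} (hx : x ∈ U) (hx0 : x.im = 0)
    (h0 : ∀ z ∈ U, z.im = 0 → f z = 0) (heven : ∀ z ∈ U, f (conj z) = f z) : EqOn f 0 U := by
  refine hf.eqOn_zero_of_cauchy_data hU hUc hx hx0 h0 fun z hz hz0 ↦ ?_
  have hconj : conj z = z := Complex.conj_eq_iff_im.2 hz0
  have hI : fderiv ℝ f z (-Complex.I) = fderiv ℝ f z Complex.I := by
    have hcomp : HasFDerivAt (fun w ↦ f (conj w))
        ((fderiv ℝ f z).comp Complex.conjCLE.toContinuousLinearMap) z :=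
      HasFDerivAt.comp z (hconj.symm ▸ hf.hasFDerivAt hz) Complex.conjCLE.hasFDerivAt
    simpa using DFunLike.congr_fun ((hcomp.congr_of_eventuallyEq
      (eventually_of_mem (hU.mem_nhds hz) fun w hw ↦ (heven w hw).symm)).unique
        (hf.hasFDerivAt hz)) Complex.I
  exact eq_zero_of_apply_one_of_apply_I
    (fderiv_one_eq_zero_of_eq_zero_of_im_eq_zero hU h0 hz hz0 (hf.hasFDerivAt hz).differentiableAt)
    (self_eq_neg.1 (by rw [← map_neg, hI]))

end UniqueContinuation

section Growth

lemma norm_le_of_norm_deriv_sub_I_mul_le {κ C R ρ : ℝ} {h h' : ℝ → ℂ} (hRρ : R ≤ ρ)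
    (hd : ∀ s ∈ Icc R ρ, HasDerivAt h (h' s) s)
    (hC : ∀ s ∈ Icc R ρ, ‖h' s - Complex.I * κ * h s‖ ≤ C) :
    ‖h ρ‖ ≤ ‖h R‖ + C * (ρ - R) := by
  set w : ℝ → ℂ := fun s ↦ Complex.exp (-(Complex.I * κ * s)) with hw
  have hw1 (s : ℝ) : ‖w s‖ = 1 := by simp [hw, Complex.norm_exp]
  have hwd (s : ℝ) : HasDerivAt w (w s * -(Complex.I * κ)) s := by
    simpa using ((hasDerivAt_id s).ofReal_comp.const_mul (Complex.I * κ)).neg.cexp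
  have hmv := (convex_Icc R ρ).norm_image_sub_le_of_norm_hasDerivWithin_le
    (f := fun s ↦ w s * h s) (f' := fun s ↦ w s * (h' s - Complex.I * κ * h s))
    (fun s hs ↦ (((hwd s).mul (hd s hs)).congr_deriv (by ring)).hasDerivWithinAt)
    (fun s hs ↦ by simpa only [norm_mul, hw1, one_mul] using hC s hs)
    (left_mem_Icc.2 hRρ) (right_mem_Icc.2 hRρ)
  rw [norm_of_nonneg (sub_nonneg.2 hRρ)] at hmv
  have htri := norm_le_norm_add_norm_sub' (w ρ * h ρ) (w R * h R)
  simp only [norm_mul, hw1, one_mul] at htri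
  exact htri.trans (by gcongr)

variable {E : Type*} [NormedAddCommGroup E] [NormedSpace ℝ E] {κ : ℝ} {q : E} {f : E → ℂ}

lemma IsRadiating.exists_forall_norm_fderiv_sub_le (hf : IsRadiating κ q f)
    (hd : ∀ᶠ x in cobounded E, DifferentiableAt ℝ f x) :
    ∃ R : ℝ, 1 ≤ R ∧ ∀ u : E, ‖u‖ = 1 → ∀ s, R ≤ s → DifferentiableAt ℝ f (q + s • u) ∧
      ‖fderiv ℝ f (q + s • u) u - Complex.I * κ * f (q + s • u)‖ ≤ 1 := by
  obtain ⟨R, -, hR⟩ := (Metric.hasBasis_cobounded_compl_ball q).eventually_iff.1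
    (hd.and (hf.norm.eventually_le_const (by simp : ‖(0 : ℂ)‖ < 1)))
  refine ⟨max R 1, le_max_right _ _, fun u hu s hs ↦ ?_⟩
  have hs1 : 1 ≤ s := (le_max_right _ _).trans hs
  have hnorm : ‖s • u‖ = s := by rw [norm_smul, hu, mul_one, norm_of_nonneg (by linarith)]
  obtain ⟨hds, hrad⟩ := hR (x := q + s • u) (by
    simpa [dist_eq_norm, hnorm] using (le_max_left _ _).trans hs)
  rw [radiationDefect, add_sub_cancel_left, hnorm, inv_smul_smul₀ (by linarith), norm_mul,
    Complex.norm_of_nonneg (sqrt_nonneg s)] at hrad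
  exact ⟨hds, (le_mul_of_one_le_left (norm_nonneg _) (one_le_sqrt.2 hs1)).trans hrad⟩

lemma IsRadiating.isBigO_norm_sub [ProperSpace E] (hf : IsRadiating κ q f)
    (hd : ∀ᶠ x in cobounded E, DifferentiableAt ℝ f x) :
    f =O[cobounded E] fun x ↦ ‖x - q‖ := by
  obtain ⟨R, hR, hray⟩ := hf.exists_forall_norm_fderiv_sub_le hd
  have hpolar {x : E} (hx : R ≤ ‖x - q‖) :
      ‖‖x - q‖⁻¹ • (x - q)‖ = 1 ∧ q + ‖x - q‖ • ‖x - q‖⁻¹ • (x - q) = x := by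
    have hx0 : ‖x - q‖ ≠ 0 := by linarith
    rw [norm_smul, norm_inv, norm_norm, inv_mul_cancel₀ hx0, smul_inv_smul₀ hx0,
      add_sub_cancel]
    exact ⟨rfl, rfl⟩
  obtain ⟨M, hM⟩ := (isCompact_sphere q R).exists_bound_of_continuousOn (f := f) fun x hx ↦ by
    have hx' := (mem_sphere_iff_norm.1 hx).ge
    have hdx := (hray _ (hpolar hx').1 _ hx').1
    rw [(hpolar hx').2] at hdx
    exact hdx.continuousAt.continuousWithinAt
  refine IsBigO.of_bound (max M 0 + 1) ?_
  filter_upwards [(Metric.hasBasis_cobounded_compl_ball q).mem_of_mem (i := R) trivial] with x hx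
  replace hx : R ≤ ‖x - q‖ := by simpa [dist_eq_norm] using hx
  obtain ⟨hu, hxu⟩ := hpolar hx
  set u := ‖x - q‖⁻¹ • (x - q)
  have hmv := norm_le_of_norm_deriv_sub_I_mul_le (h := fun s ↦ f (q + s • u)) hx
    (fun s hs ↦ (hray u hu s hs.1).1.hasFDerivAt.comp_hasDerivAt s
      (((hasDerivAt_id s).smul_const u).const_add q))
    (fun s hs ↦ by simpa only [id, one_smul] using (hray u hu s hs.1).2)
  have hMR := hM (q + R • u) (by
    rw [mem_sphere_iff_norm, add_sub_cancel_left, norm_smul, hu, mul_one,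
      norm_of_nonneg (by linarith)])
  rw [hxu] at hmv
  rw [norm_norm]
  nlinarith [le_max_left M 0, le_max_right M 0]

end Growth

section Recentering

variable {α : Type*} {l : Filter α} {r a b : α → ℝ}

lemma isEquivalent_sub_of_isBigO_one (hr : Tendsto r l atTop) (ha : a =O[l] fun _ ↦ (1 : ℝ)) :
    IsEquivalent l (fun x ↦ r x - a x) r :=
  IsEquivalent.refl.sub_isLittleO <| ha.trans_isLittleO <|
    (isLittleO_one_left_iff ℝ).2 (tendsto_norm_atTop_atTop.comp hr)

lemma abs_sqrt_sq_add_sq_div_sub_one_le {x : ℝ} (hx : 0 < x) (y : ℝ) :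
    |√(x ^ 2 + y ^ 2) / x - 1| ≤ y ^ 2 * x⁻¹ ^ 2 := by
  have hy : 0 ≤ y ^ 2 * x⁻¹ ^ 2 := by positivity
  rw [show x ^ 2 + y ^ 2 = x ^ 2 * (1 + y ^ 2 * x⁻¹ ^ 2) by field_simp, sqrt_mul (sq_nonneg x),
    sqrt_sq hx.le, mul_div_cancel_left₀ _ hx.ne', abs_of_nonneg (by simpa using hy)]
  linarith [sqrt_one_add_le (hy.trans' (by norm_num : (-1 : ℝ) ≤ 0))]

lemma isBigO_inv_sub (hr : Tendsto r l atTop) (ha : a =O[l] fun _ ↦ (1 : ℝ)) :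
    (fun x ↦ (r x - a x)⁻¹) =O[l] fun x ↦ (r x)⁻¹ :=
  (isEquivalent_sub_of_isBigO_one hr ha).inv.isBigO

lemma isBigO_sqrt_div_sub_one (hr : Tendsto r l atTop) (ha : a =O[l] fun _ ↦ (1 : ℝ))
    (hb : b =O[l] fun _ ↦ (1 : ℝ)) :
    (fun x ↦ √((r x - a x) ^ 2 + b x ^ 2) / (r x - a x) - 1) =O[l] fun x ↦ (r x)⁻¹ ^ 2 := by
  have hra := isEquivalent_sub_of_isBigO_one hr ha
  have hbr : (fun x ↦ b x ^ 2 * (r x - a x)⁻¹ ^ 2) =O[l] fun x ↦ (r x)⁻¹ ^ 2 := by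
    simpa using (hb.pow 2).mul ((isBigO_inv_sub hr ha).pow 2)
  refine (IsBigO.of_bound' ?_).trans hbr
  filter_upwards [(hra.symm.tendsto_atTop hr).eventually_gt_atTop 0] with x hx
  exact (abs_sqrt_sq_add_sq_div_sub_one_le hx (b x)).trans (le_abs_self _)

lemma tendsto_sqrt_mul_of_isBigO {A G : α → ℂ} (hr : Tendsto r l atTop)
    (hA : A =O[l] fun x ↦ (r x)⁻¹ ^ 2) (hG : G =O[l] r) :
    Tendsto (fun x ↦ (√(r x) : ℂ) * (A x * G x)) l (𝓝 0) := by
  have hsqrt : (fun x ↦ (√(r x) : ℂ)) =O[l] fun x ↦ √(r x) :=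
    IsBigO.of_bound' (Eventually.of_forall fun x ↦ by simp)
  refine (hsqrt.mul (hA.mul hG)).trans_tendsto <|
    (tendsto_inv_atTop_zero.comp (tendsto_sqrt_atTop.comp hr)).congr' ?_
  filter_upwards [hr.eventually_gt_atTop 0] with x hx
  have := mul_self_sqrt hx.le
  have := sqrt_pos.2 hx
  simp only [Function.comp_apply]
  field_simp
  nlinarith

/-- The position of `q` relative to `c` in the frame rotated by the angle `t`, in which the outer
normal of a circle about `c` at `circleMap c r t` is the positive real direction. -/
def rotatedCenter (c q : ℂ) (t : ℝ) : ℂ := (q - c) * circleMap 0 1 (-t)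

lemma norm_rotatedCenter (c q : ℂ) (t : ℝ) : ‖rotatedCenter c q t‖ = ‖q - c‖ := by
  simp [rotatedCenter]

lemma periodic_rotatedCenter (c q : ℂ) : Function.Periodic (rotatedCenter c q) (2 * π) := fun t ↦ by
  rw [rotatedCenter, rotatedCenter, neg_add, ← sub_eq_add_neg, (periodic_circleMap 0 1).sub_eq]

lemma hasDerivAt_rotatedCenter (c q : ℂ) (t : ℝ) :
    HasDerivAt (rotatedCenter c q) (-(Complex.I * rotatedCenter c q t)) t := by
  refine (((hasDerivAt_circleMap 0 1 (-t)).scomp t (hasDerivAt_neg t)).const_mul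
    (q - c)).congr_deriv ?_
  simp only [neg_smul, one_smul, mul_neg, rotatedCenter, neg_inj]
  ring

lemma hasDerivAt_rotatedCenter_re (c q : ℂ) (t : ℝ) :
    HasDerivAt (fun t ↦ (rotatedCenter c q t).re) (rotatedCenter c q t).im t :=
  (Complex.reCLM.hasFDerivAt.comp_hasDerivAt t (hasDerivAt_rotatedCenter c q t)).congr_deriv
    (by simp)

lemma hasDerivAt_rotatedCenter_im (c q : ℂ) (t : ℝ) :
    HasDerivAt (fun t ↦ (rotatedCenter c q t).im) (-(rotatedCenter c q t).re) t :=
  (Complex.imCLM.hasFDerivAt.comp_hasDerivAt t (hasDerivAt_rotatedCenter c q t)).congr_deriv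
    (by simp)

lemma circleMap_sub_eq_mul (c q : ℂ) (r t : ℝ) :
    circleMap c r t - q = circleMap 0 1 t * (r - rotatedCenter c q t) := by
  have hinv : circleMap 0 1 t * circleMap 0 1 (-t) = 1 := by simp [circleMap, ← Complex.exp_add]
  have hmap : circleMap c r t = c + r * circleMap 0 1 t := by simp [circleMap]
  rw [rotatedCenter, hmap]
  linear_combination (q - c) * hinv

lemma norm_circleMap_sub (c q : ℂ) (r t : ℝ) :
    ‖circleMap c r t - q‖ =
      √((r - (rotatedCenter c q t).re) ^ 2 + (rotatedCenter c q t).im ^ 2) := by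
  rw [circleMap_sub_eq_mul, norm_mul, norm_circleMap_zero, abs_one, one_mul,
    Complex.norm_eq_sqrt_sq_add_sq]
  simp

lemma circleMap_sub_eq_smul_sub_smul (c q : ℂ) (r t : ℝ) :
    circleMap c r t - q = (r - (rotatedCenter c q t).re) • circleMap 0 1 t -
      (rotatedCenter c q t).im • (Complex.I * circleMap 0 1 t) := by
  rw [circleMap_sub_eq_mul]
  nth_rw 1 [← Complex.re_add_im (rotatedCenter c q t)]
  simp only [Complex.real_smul]
  push_cast
  ring

lemma sub_rotatedCenter_re_pos {c q : ℂ} {r : ℝ} (hr : ‖q - c‖ < r) (t : ℝ) :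
    0 < r - (rotatedCenter c q t).re :=
  sub_pos.2 <| ((Complex.re_le_norm _).trans (norm_rotatedCenter c q t).le).trans_lt hr

lemma isTheta_circleMap_sub (c q : ℂ) :
    (fun x : ℝ × ℝ ↦ circleMap c x.1 x.2 - q) =Θ[atTop ×ˢ ⊤] fun x ↦ x.1 := by
  have hr : Tendsto (fun x : ℝ × ℝ ↦ ‖x.1‖) (atTop ×ˢ ⊤) atTop :=
    tendsto_norm_atTop_atTop.comp tendsto_fst
  have h0 : (fun x : ℝ × ℝ ↦ circleMap 0 x.1 x.2) =Θ[atTop ×ˢ ⊤] fun x ↦ x.1 :=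
    IsTheta.of_norm_eventuallyEq_norm (.of_forall fun x ↦ by simp)
  have hcq : (fun _ : ℝ × ℝ ↦ c - q) =o[atTop ×ˢ ⊤] fun x ↦ x.1 :=
    isLittleO_const_left.2 (.inr hr)
  have hsplit : (fun x : ℝ × ℝ ↦ circleMap c x.1 x.2 - q) =
      (fun x : ℝ × ℝ ↦ circleMap 0 x.1 x.2) + fun _ ↦ c - q := by
    ext x
    simp only [circleMap, Pi.add_apply]
    ring
  exact hsplit ▸ h0.add_isLittleO hcq

lemma tendsto_circleMap_cobounded (c : ℂ) :
    Tendsto (fun x : ℝ × ℝ ↦ circleMap c x.1 x.2) (atTop ×ˢ ⊤) (cobounded ℂ) := by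
  rw [← tendsto_norm_atTop_iff_cobounded]
  have h := (isTheta_circleMap_sub c 0).tendsto_norm_atTop_iff.2
    (tendsto_norm_atTop_atTop.comp tendsto_fst)
  simpa only [sub_zero, Function.comp_def] using h

lemma eventually_forall_circleMap {p : ℂ → Prop} (hp : ∀ᶠ z in cobounded ℂ, p z) (c : ℂ) :
    ∀ᶠ r : ℝ in atTop, ∀ t, p (circleMap c r t) :=
  ((tendsto_circleMap_cobounded c).eventually hp).curry.mono fun _ ↦ eventually_top.1

/-- The tangent of the angle at `circleMap c r t` between the directions away from `c` and `q`. -/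
def tanAngle (c q : ℂ) (r t : ℝ) : ℝ := (rotatedCenter c q t).im / (r - (rotatedCenter c q t).re)

lemma hasDerivAt_tanAngle {c q : ℂ} {r : ℝ} (hr : ‖q - c‖ < r) (t : ℝ) :
    HasDerivAt (tanAngle c q r)
      (tanAngle c q r t ^ 2 - (rotatedCenter c q t).re / (r - (rotatedCenter c q t).re)) t := by
  have h0 := (sub_rotatedCenter_re_pos hr t).ne'
  refine ((hasDerivAt_rotatedCenter_im c q t).div
    ((hasDerivAt_rotatedCenter_re c q t).const_sub r) h0).congr_deriv ?_
  rw [tanAngle]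
  field_simp
  ring

/-- The secant of the angle at `circleMap c r t` between the directions away from `c` and `q`. -/
def secAngle (c q : ℂ) (r t : ℝ) : ℝ := ‖circleMap c r t - q‖ / (r - (rotatedCenter c q t).re)

lemma fderiv_circleMap_sub_eq {κ : ℝ} {c q : ℂ} {r : ℝ} (hr : ‖q - c‖ < r) (f : ℂ → ℂ) (t : ℝ) :
    fderiv ℝ f (circleMap c r t) (circleMap 0 1 t) - Complex.I * κ * f (circleMap c r t) =
      (secAngle c q r t - 1 : ℝ) * (Complex.I * κ * f (circleMap c r t)) +
      secAngle c q r t * radiationDefect κ q f (circleMap c r t) +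
      tanAngle c q r t • fderiv ℝ f (circleMap c r t) (Complex.I * circleMap 0 1 t) := by
  have h0 := sub_rotatedCenter_re_pos hr t
  have hs : 0 < ‖circleMap c r t - q‖ := by
    rw [norm_circleMap_sub]
    positivity
  rw [radiationDefect, map_smul, tanAngle, secAngle]
  set A := fderiv ℝ f (circleMap c r t)
  have hA : A (circleMap c r t - q) = (r - (rotatedCenter c q t).re) • A (circleMap 0 1 t) -
      (rotatedCenter c q t).im • A (Complex.I * circleMap 0 1 t) := by
    rw [circleMap_sub_eq_smul_sub_smul, map_sub, map_smul, map_smul]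
  rw [hA]
  simp only [Complex.real_smul]
  push_cast
  have h0' : (r : ℂ) - (rotatedCenter c q t).re ≠ 0 := by exact_mod_cast h0.ne'
  have hs' : (‖circleMap c r t - q‖ : ℂ) ≠ 0 := by exact_mod_cast hs.ne'
  field_simp
  ring

lemma fourierCoeffOn_add_I_mul_sub_deriv {h k k' : ℝ → ℂ} (hh : Continuous h)
    (hk : ∀ t, HasDerivAt k (k' t) t) (hk' : Continuous k') (hper : Function.Periodic k (2 * π))
    (n : ℤ) :
    fourierCoeffOn two_pi_pos (fun t ↦ h t + (Complex.I * n * k t - k' t)) n =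
      fourierCoeffOn two_pi_pos h n := by
  have hkc : Continuous k := continuous_iff_continuousAt.2 fun t ↦ (hk t).continuousAt
  rw [← sub_eq_zero, ← fourierCoeffOn_sub two_pi_pos
    (Continuous.intervalIntegrable (by fun_prop) _ _) (hh.intervalIntegrable _ _), Pi.sub_def]
  simp only [add_sub_cancel_left]
  change fourierCoeffOn two_pi_pos ((fun t ↦ Complex.I * n * k t) - k') n = 0
  rw [fourierCoeffOn_sub two_pi_pos (Continuous.intervalIntegrable (by fun_prop) _ _)
    (hk'.intervalIntegrable _ _), fourierCoeffOn_two_pi_deriv hk hk' hper,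
    fourierCoeffOn.const_mul, sub_self]

lemma isBigO_rotatedCenter_re (c q : ℂ) {l : Filter ℝ} :
    (fun x : ℝ × ℝ ↦ (rotatedCenter c q x.2).re) =O[l ×ˢ ⊤] fun _ ↦ (1 : ℝ) :=
  .of_bound ‖q - c‖ <| .of_forall fun x ↦ by
    simpa [norm_rotatedCenter] using Complex.abs_re_le_norm (rotatedCenter c q x.2)

lemma isBigO_rotatedCenter_im (c q : ℂ) {l : Filter ℝ} :
    (fun x : ℝ × ℝ ↦ (rotatedCenter c q x.2).im) =O[l ×ˢ ⊤] fun _ ↦ (1 : ℝ) :=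
  .of_bound ‖q - c‖ <| .of_forall fun x ↦ by
    simpa [norm_rotatedCenter] using Complex.abs_im_le_norm (rotatedCenter c q x.2)

lemma isBigO_secAngle_sub_one (c q : ℂ) :
    (fun x : ℝ × ℝ ↦ secAngle c q x.1 x.2 - 1) =O[atTop ×ˢ ⊤] fun x ↦ x.1⁻¹ ^ 2 := by
  simpa only [secAngle, norm_circleMap_sub] using isBigO_sqrt_div_sub_one tendsto_fst
    (isBigO_rotatedCenter_re c q) (isBigO_rotatedCenter_im c q)

/-- The factor of the zeroth-order term that remains when the radiation condition about `q` is
rewritten on the circle of radius `r` about `c` and tested against the `n`-th Fourier mode. -/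
def recenteringError (κ : ℝ) (c q : ℂ) (n : ℤ) (r t : ℝ) : ℂ :=
  (secAngle c q r t - 1 : ℝ) * (Complex.I * κ) +
    (r⁻¹ : ℝ) * (Complex.I * n * tanAngle c q r t - (tanAngle c q r t ^ 2 -
      (rotatedCenter c q t).re / (r - (rotatedCenter c q t).re) : ℝ))

lemma isBigO_recenteringError (κ : ℝ) (c q : ℂ) (n : ℤ) :
    (fun x : ℝ × ℝ ↦ recenteringError κ c q n x.1 x.2) =O[atTop ×ˢ ⊤] fun x ↦ x.1⁻¹ ^ 2 := by
  have hr : Tendsto (fun x : ℝ × ℝ ↦ x.1) (atTop ×ˢ ⊤) atTop := tendsto_fst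
  have ha := isBigO_rotatedCenter_re c q (l := atTop)
  have hb := isBigO_rotatedCenter_im c q (l := atTop)
  have hinv := isBigO_inv_sub hr ha
  have hone : (fun x : ℝ × ℝ ↦ x.1⁻¹) =O[atTop ×ˢ ⊤] fun _ ↦ (1 : ℝ) :=
    (tendsto_inv_atTop_zero.comp hr).isBigO_one ℝ
  have hτ : (fun x : ℝ × ℝ ↦ tanAngle c q x.1 x.2) =O[atTop ×ˢ ⊤] fun x ↦ x.1⁻¹ := by
    simpa only [tanAngle, div_eq_mul_inv, one_mul] using hb.mul hinv
  have hτ' : (fun x : ℝ × ℝ ↦ tanAngle c q x.1 x.2 ^ 2 - (rotatedCenter c q x.2).re /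
      (x.1 - (rotatedCenter c q x.2).re)) =O[atTop ×ˢ ⊤] fun x ↦ x.1⁻¹ := by
    refine IsBigO.sub ?_ (by simpa only [div_eq_mul_inv, one_mul] using ha.mul hinv)
    simpa only [sq, mul_one] using hτ.mul (hτ.trans hone)
  refine IsBigO.add ?_ ?_
  · simpa only [mul_one] using (Complex.isBigO_ofReal_left.2 (isBigO_secAngle_sub_one c q)).mul
      (isBigO_const_const (Complex.I * κ) (one_ne_zero (α := ℝ)) _)
  · simp only [sq (_⁻¹)]
    refine (Complex.isBigO_ofReal_left.2 (isBigO_refl _ _)).mul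
      (IsBigO.sub ?_ (Complex.isBigO_ofReal_left.2 hτ'))
    exact (Complex.isBigO_ofReal_left.2 hτ).const_mul_left _

lemma radialMode_sub_mode_eq_fourierCoeffOn {κ : ℝ} {c : ℂ} {f : ℂ → ℂ} {r : ℝ}
    (hf : ∀ t, ContDiffAt ℝ 1 f (circleMap c r t)) (n : ℤ) :
    radialMode f c n r - Complex.I * κ * mode f c n r = fourierCoeffOn two_pi_pos
      (fun t ↦ fderiv ℝ f (circleMap c r t) (circleMap 0 1 t) -
        Complex.I * κ * f (circleMap c r t)) n := by
  have hD : Continuous fun t ↦ fderiv ℝ f (circleMap c r t) (circleMap 0 1 t) :=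
    (continuous_fderiv_circleMap hf).clm_apply (by fun_prop)
  have hG : Continuous fun t ↦ f (circleMap c r t) :=
    continuous_comp_circleMap fun t ↦ (hf t).continuousAt
  rw [radialMode, mode, ← fourierCoeffOn.const_mul, ← fourierCoeffOn_sub two_pi_pos
    (hD.intervalIntegrable _ _) ((hG.const_mul _).intervalIntegrable _ _)]
  rfl

lemma radialMode_sub_mode_eq_fourierCoeffOn_radiationDefect {κ : ℝ} {c q : ℂ} {f : ℂ → ℂ} {r : ℝ}
    (hf : ∀ t, ContDiffAt ℝ 1 f (circleMap c r t)) (hr : ‖q - c‖ < r) (n : ℤ) :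
    radialMode f c n r - Complex.I * κ * mode f c n r =
      fourierCoeffOn two_pi_pos (fun t ↦ recenteringError κ c q n r t * f (circleMap c r t) +
        secAngle c q r t * radiationDefect κ q f (circleMap c r t)) n := by
  have hr0 : r ≠ 0 := ((norm_nonneg _).trans_lt hr).ne'
  have hG : Continuous fun t ↦ f (circleMap c r t) :=
    continuous_comp_circleMap fun t ↦ (hf t).continuousAt
  have hf' := continuous_fderiv_circleMap hf
  have hD : Continuous fun t ↦ fderiv ℝ f (circleMap c r t) (circleMap 0 1 t) :=
    hf'.clm_apply (by fun_prop)
  have hτ : Continuous (tanAngle c q r) :=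
    continuous_iff_continuousAt.2 fun t ↦ (hasDerivAt_tanAngle hr t).continuousAt
  have hre : Continuous fun t ↦ (rotatedCenter c q t).re :=
    continuous_iff_continuousAt.2 fun t ↦ (hasDerivAt_rotatedCenter_re c q t).continuousAt
  have hk (t : ℝ) := (((hasDerivAt_tanAngle hr t).ofReal_comp.fun_mul
    (hasDerivAt_comp_circleMap_angle ((hf t).differentiableAt one_ne_zero))).const_mul
      (r⁻¹ : ℂ))
  have hper : Function.Periodic (fun t ↦ (r⁻¹ : ℂ) * (tanAngle c q r t * f (circleMap c r t)))
      (2 * π) := fun t ↦ by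
    simp only [tanAngle, periodic_rotatedCenter c q t, periodic_circleMap c r t]
  have hdefect : Continuous fun t ↦ fderiv ℝ f (circleMap c r t) (circleMap 0 1 t) -
      Complex.I * κ * f (circleMap c r t) := hD.sub (hG.const_mul _)
  rw [radialMode_sub_mode_eq_fourierCoeffOn hf,
    ← fourierCoeffOn_add_I_mul_sub_deriv hdefect hk ?_ hper n]
  · congr 1 with t
    rw [fderiv_circleMap_sub_eq hr, recenteringError]
    simp only [Complex.real_smul]
    push_cast
    have hr0' : (r : ℂ) ≠ 0 := by exact_mod_cast hr0
    field_simp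
    ring
  · refine .const_mul (.add (.mul (Complex.continuous_ofReal.comp ?_) hG)
      (.mul (Complex.continuous_ofReal.comp hτ) (.const_smul (hf'.clm_apply (by fun_prop)) r))) _
    exact (hτ.pow 2).sub <| hre.div₀ (continuous_const.sub hre) fun t ↦
      (sub_rotatedCenter_re_pos hr t).ne'

lemma tendsto_recentered_radiation {κ : ℝ} {c q : ℂ} {f : ℂ → ℂ} (hf : IsRadiating κ q f)
    (hd : ∀ᶠ z in cobounded ℂ, DifferentiableAt ℝ f z) (n : ℤ) :
    Tendsto (fun x : ℝ × ℝ ↦ (√x.1 : ℂ) *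
      (recenteringError κ c q n x.1 x.2 * f (circleMap c x.1 x.2) +
        secAngle c q x.1 x.2 * radiationDefect κ q f (circleMap c x.1 x.2)))
      (atTop ×ˢ ⊤) (𝓝 0) := by
  have hr : Tendsto (fun x : ℝ × ℝ ↦ x.1) (atTop ×ˢ ⊤) atTop := tendsto_fst
  have hθ := isTheta_circleMap_sub c q
  have hcirc := tendsto_circleMap_cobounded c
  have hmain := tendsto_sqrt_mul_of_isBigO hr (isBigO_recenteringError κ c q n)
    (((hf.isBigO_norm_sub hd).comp_tendsto hcirc).trans hθ.1.norm_left)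
  have hsec : (fun x : ℝ × ℝ ↦ (secAngle c q x.1 x.2 : ℂ)) =O[atTop ×ˢ ⊤] fun _ ↦ (1 : ℂ) := by
    have hinv : Tendsto (fun x : ℝ × ℝ ↦ x.1⁻¹ ^ 2) (atTop ×ˢ ⊤) (𝓝 0) := by
      simpa using (tendsto_inv_atTop_zero.comp hr).pow 2
    have h := ((isBigO_secAngle_sub_one c q).trans_tendsto hinv).add_const 1
    simp only [sub_add_cancel] at h
    exact Complex.isBigO_ofReal_left.2 (h.isBigO_one ℂ)
  have hsqrt : (fun x : ℝ × ℝ ↦ (√x.1 : ℂ)) =O[atTop ×ˢ ⊤]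
      fun x ↦ (√‖circleMap c x.1 x.2 - q‖ : ℂ) :=
    Complex.isBigO_ofReal_left.2 <| Complex.isBigO_ofReal_right.2 <|
      hθ.2.norm_right.sqrt (.of_forall fun x ↦ norm_nonneg _)
  have hdefect := (hsqrt.mul (hsec.mul (isBigO_refl
    (fun x ↦ radiationDefect κ q f (circleMap c x.1 x.2)) _))).trans_tendsto
      (by simpa only [one_mul, Function.comp_def] using hf.comp hcirc)
  simpa only [mul_add, add_zero, Function.comp_apply] using hmain.add hdefect

/-- The radiation condition for each Fourier mode of `f` about `c` separately. Unlike `IsRadiating`,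
it follows from a radiation condition about any other center. -/
def HasRadiatingModes (κ : ℝ) (c : ℂ) (f : ℂ → ℂ) : Prop :=
  ∀ n, Tendsto (fun r ↦ (√r : ℂ) * (radialMode f c n r - Complex.I * κ * mode f c n r)) atTop (𝓝 0)

lemma IsRadiating.hasRadiatingModes {κ : ℝ} {q : ℂ} {f : ℂ → ℂ} (hf : IsRadiating κ q f)
    (hd : ∀ᶠ z in cobounded ℂ, ContDiffAt ℝ 1 f z) (c : ℂ) : HasRadiatingModes κ c f := fun n ↦ by
  have h := tendsto_recentered_radiation (c := c) hf
    (hd.mono fun z hz ↦ hz.differentiableAt one_ne_zero) n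
  refine (tendsto_fourierCoeffOn two_pi_pos (F := fun r t ↦ (√r : ℂ) *
    (recenteringError κ c q n r t * f (circleMap c r t) +
      secAngle c q r t * radiationDefect κ q f (circleMap c r t))) h n).congr' ?_
  filter_upwards [eventually_forall_circleMap hd c, eventually_gt_atTop ‖q - c‖] with r hr hqr
  rw [fourierCoeffOn.const_mul, radialMode_sub_mode_eq_fourierCoeffOn_radiationDefect hr hqr]

end Recentering

section Uniqueness

variable {κ : ℝ} {c : ℂ} {f g : ℂ → ℂ}

lemma mode_add {r : ℝ} (hf : ∀ t, ContinuousAt f (circleMap c r t))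
    (hg : ∀ t, ContinuousAt g (circleMap c r t)) (n : ℤ) :
    mode (f + g) c n r = mode f c n r + mode g c n r :=
  fourierCoeffOn_add two_pi_pos ((continuous_comp_circleMap hf).intervalIntegrable _ _)
    ((continuous_comp_circleMap hg).intervalIntegrable _ _) n

lemma radialMode_add {r : ℝ} (hf : ∀ t, ContDiffAt ℝ 1 f (circleMap c r t))
    (hg : ∀ t, ContDiffAt ℝ 1 g (circleMap c r t)) (n : ℤ) :
    radialMode (f + g) c n r = radialMode f c n r + radialMode g c n r := by
  rw [radialMode, radialMode, radialMode, ← fourierCoeffOn_add two_pi_pos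
    (((continuous_fderiv_circleMap hf).clm_apply (by fun_prop)).intervalIntegrable _ _)
    (((continuous_fderiv_circleMap hg).clm_apply (by fun_prop)).intervalIntegrable _ _)]
  congr 1 with t
  rw [fderiv_add ((hf t).differentiableAt one_ne_zero) ((hg t).differentiableAt one_ne_zero)]
  rfl

lemma radialMode_conj (f : ℂ → ℂ) (c : ℂ) (n : ℤ) (r : ℝ) :
    radialMode (fun z ↦ conj (f z)) c n r = conj (radialMode f c (-n) r) := by
  rw [radialMode, radialMode, ← fourierCoeffOn_conj]
  congr 1 with t
  exact DFunLike.congr_fun (Complex.conjCLE.comp_fderiv (f := f) (x := circleMap c r t)) _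

lemma HasRadiatingModes.add (hf : HasRadiatingModes κ c f) (hg : HasRadiatingModes κ c g)
    (hfd : ∀ᶠ z in cobounded ℂ, ContDiffAt ℝ 1 f z)
    (hgd : ∀ᶠ z in cobounded ℂ, ContDiffAt ℝ 1 g z) : HasRadiatingModes κ c (f + g) := fun n ↦ by
  have h := (hf n).add (hg n)
  rw [add_zero] at h
  refine h.congr' ?_
  filter_upwards [eventually_forall_circleMap hfd c, eventually_forall_circleMap hgd c]
    with r hfr hgr
  rw [mode_add (fun t ↦ (hfr t).continuousAt) (fun t ↦ (hgr t).continuousAt),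
    radialMode_add hfr hgr]
  ring

lemma circleMap_mem_compl_closedBall {R r : ℝ} (hR : 0 ≤ R) (hr : R < r) (c : ℂ) (t : ℝ) :
    circleMap c r t ∈ (Metric.closedBall c R)ᶜ := by
  simpa [dist_eq_norm, abs_of_pos (hR.trans_lt hr)] using hr

lemma isPreconnected_compl_closedBall (c : ℂ) {R : ℝ} (hR : 0 ≤ R) :
    IsPreconnected (Metric.closedBall c R)ᶜ := by
  have h : (Metric.closedBall c R)ᶜ =
      (fun p : ℝ × ℝ ↦ circleMap c p.1 p.2) '' (Ioi R ×ˢ univ) := by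
    refine Subset.antisymm (fun z hz ↦ ?_) (image_subset_iff.2 fun p hp ↦
      circleMap_mem_compl_closedBall hR hp.1 c p.2)
    have hz' : z ∈ range (circleMap c (dist z c)) := by simp [dist_eq_norm]
    obtain ⟨t, ht⟩ := hz'
    exact ⟨(dist z c, t), ⟨by simpa using hz, trivial⟩, ht⟩
  rw [h]
  exact (isPreconnected_Ioi.prod isPreconnected_univ).image _
    (by simp only [circleMap]; fun_prop)

lemma IsHelmholtzOn.eqOn_zero_of_mode_eq_zero {R : ℝ} (hR : 0 ≤ R)
    (hf : IsHelmholtzOn κ f (Metric.closedBall c R)ᶜ)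
    (h : ∀ n, EqOn (mode f c n) 0 (Ioi R)) : EqOn f 0 (Metric.closedBall c R)ᶜ := fun z hz ↦ by
  have hz' : R < dist z c := by simpa using hz
  exact eq_zero_of_mode_eq_zero (fun t ↦
    (hf _ (circleMap_mem_compl_closedBall hR hz' c t)).1.continuousAt) (h · hz')
    (by simp [dist_eq_norm])

lemma IsHelmholtzOn.eqOn_zero_of_conj_eq (hκ : 0 < κ) {R : ℝ} (hR : 0 ≤ R)
    (hf : IsHelmholtzOn κ f (Metric.closedBall c R)ᶜ) (hrad : HasRadiatingModes κ c f)
    (hreal : ∀ z ∈ (Metric.closedBall c R)ᶜ, conj (f z) = f z) :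
    EqOn f 0 (Metric.closedBall c R)ᶜ := by
  refine hf.eqOn_zero_of_mode_eq_zero hR fun n ↦ ?_
  refine (isBesselOn_mode isOpen_Ioi (by simpa using hR) hf (fun r hr ↦
    circleMap_mem_compl_closedBall hR hr c) n).eqOn_zero_of_radiating_of_conj_radiating hκ hR
      (hrad n) ?_
  have h := (Complex.continuous_conj.tendsto _).comp (hrad (-n))
  rw [map_zero] at h
  refine h.congr' ((eventually_gt_atTop R).mono fun r hr ↦ ?_)
  have hmem := circleMap_mem_compl_closedBall hR hr c
  have hmode : conj (mode f c (-n) r) = mode f c n r := by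
    rw [← mode_conj]
    exact congrArg (fourierCoeffOn two_pi_pos · n) (funext fun t ↦ hreal _ (hmem t))
  have hradial : conj (radialMode f c (-n) r) = radialMode f c n r := by
    rw [← radialMode_conj]
    refine congrArg (fourierCoeffOn two_pi_pos · n) (funext fun t ↦ ?_)
    rw [(eventuallyEq_of_mem (Metric.isClosed_closedBall.isOpen_compl.mem_nhds (hmem t))
      hreal).fderiv_eq]
  simp only [Function.comp_apply, map_mul, map_sub, Complex.conj_ofReal, Complex.conj_I, hmode,
    hradial]
  ring

lemma eq_zero_of_hasDerivAt_zero_mul {w : ℝ → ℝ} (hw : ContinuousOn w (Ici 0))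
    (hd : ∀ r, 0 < r → HasDerivAt (fun r ↦ r * w r) 0 r) {r : ℝ} (hr : 0 < r) : w r = 0 := by
  obtain ⟨s, -, h⟩ := exists_hasDerivAt_eq_slope (fun r ↦ r * w r) 0 hr
    (continuousOn_id.mul (hw.mono Icc_subset_Ici_self)) fun s hs ↦ hd s hs.1
  have hrw : r * w r / r = 0 := by simpa using h.symm
  rwa [mul_div_cancel_left₀ _ hr.ne'] at hrw

lemma IsHelmholtzOn.eq_zero_of_hasRadiatingModes (hκ : 0 < κ) (hf : IsHelmholtzOn κ f univ)
    (hrad : HasRadiatingModes κ c f) : f = 0 := by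
  have hsmooth (z : ℂ) : ContDiffAt ℝ 2 f z := (hf z (mem_univ z)).1
  suffices h : EqOn f 0 (Metric.closedBall c 0)ᶜ from
    Continuous.ext_on (Metric.closedBall_zero (x := c) ▸ dense_compl_singleton c)
      (continuous_iff_continuousAt.2 fun z ↦ (hsmooth z).continuousAt) continuous_const h
  refine (hf.mono (subset_univ _)).eqOn_zero_of_mode_eq_zero le_rfl fun n ↦ ?_
  have hB := isBesselOn_mode (c := c) isOpen_Ioi (lt_irrefl (0 : ℝ)) hf
    (fun _ _ _ ↦ mem_univ _) n
  have hmode : Continuous (mode f c n) := continuous_iff_continuousAt.2 fun r ↦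
    (hasDerivAt_mode (.of_forall fun _ _ ↦ (hsmooth _).of_le one_le_two) n).continuousAt
  have hradial : Continuous (radialMode f c n) := continuous_iff_continuousAt.2 fun r ↦
    (hasDerivAt_radialMode (.of_forall fun _ _ ↦ hsmooth _) n).continuousAt
  refine hB.eqOn_zero_of_radiating_of_flux_eq_zero hκ le_rfl (hrad n) fun r hr ↦ ?_
  have hflux := eq_zero_of_hasDerivAt_zero_mul (by fun_prop) (fun r hr ↦
    hB.hasDerivAt_wronskian (hB.const_mul Complex.I) hr hr.ne') hr
  simp only [Complex.inner, Complex.mul_re, Complex.mul_im, Complex.conj_re, Complex.conj_im,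
    Complex.I_re, Complex.I_im] at hflux ⊢
  linarith

end Uniqueness

section Reflection

variable {κ δ : ℝ} {q : ℂ} {f ψ : ℂ → ℂ} {U : Set ℂ}

lemma IsHelmholtzOn.comp_conj (hf : IsHelmholtzOn κ f U) :
    IsHelmholtzOn κ (fun z ↦ f (conj z)) (conj ⁻¹' U) :=
  hf.comp_affineIsometryEquiv Complex.conjLIE.toAffineIsometryEquiv

lemma IsRadiating.comp_conj (hf : IsRadiating κ q f) :
    IsRadiating κ (conj q) fun z ↦ f (conj z) := by
  rw [← Complex.conj_conj q] at hf
  exact hf.comp_affineIsometryEquiv Complex.conjLIE.toAffineIsometryEquiv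

lemma IsHelmholtzOn.eqOn_zero_of_even_of_im_eq_zero {R : ℝ} (hκ : 0 < κ) (hR : 0 ≤ R)
    (hf : IsHelmholtzOn κ f (Metric.closedBall 0 R)ᶜ) (hrad : HasRadiatingModes κ 0 f)
    (heven : ∀ z ∈ (Metric.closedBall 0 R)ᶜ, f (conj z) = f z)
    (him : ∀ z ∈ (Metric.closedBall 0 R)ᶜ, z.im = 0 → (f z).im = 0) :
    EqOn f 0 (Metric.closedBall 0 R)ᶜ := by
  refine hf.eqOn_zero_of_conj_eq hκ hR hrad fun z hz ↦ ?_
  have hdiff : IsHelmholtzOn κ (conj ∘ f - f) (Metric.closedBall 0 R)ᶜ :=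
    (hf.clm_comp (Complex.conjCLE : ℂ →L[ℝ] ℂ)).sub hf
  have h : EqOn (conj ∘ f - f) 0 (Metric.closedBall 0 R)ᶜ :=
    hdiff.eqOn_zero_of_comp_conj_eq Metric.isClosed_closedBall.isOpen_compl
      (isPreconnected_compl_closedBall 0 hR)
      (circleMap_mem_compl_closedBall hR (lt_add_one R) 0 0) (by simp [circleMap])
      (fun z hz hz0 ↦ sub_eq_zero.2 (Complex.conj_eq_iff_im.2 (him z hz hz0)))
      fun z hz ↦ by simp [heven z hz]
  exact sub_eq_zero.1 (h hz)

lemma IsHelmholtzOn.comp_conj_eq_neg {R : ℝ} (hκ : 0 < κ) (hR : 0 ≤ R)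
    (hψ : IsHelmholtzOn κ ψ (Metric.closedBall 0 R)ᶜ) (hrad : IsRadiating κ q ψ)
    (him : ∀ z ∈ (Metric.closedBall 0 R)ᶜ, z.im = 0 → (ψ z).im = 0) :
    ∀ z ∈ (Metric.closedBall 0 R)ᶜ, ψ (conj z) = -ψ z := by
  have hconj : conj ⁻¹' (Metric.closedBall (0 : ℂ) R)ᶜ = (Metric.closedBall 0 R)ᶜ := by
    ext z
    simp
  have hψ' := hψ.comp_conj
  rw [hconj] at hψ'
  have hV : ∀ᶠ z in cobounded ℂ, z ∈ (Metric.closedBall (0 : ℂ) R)ᶜ :=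
    Metric.isBounded_closedBall
  have hC1 : ∀ᶠ z in cobounded ℂ, ContDiffAt ℝ 1 ψ z :=
    hV.mono fun z hz ↦ (hψ z hz).1.of_le one_le_two
  have hC1' : ∀ᶠ z in cobounded ℂ, ContDiffAt ℝ 1 (fun w ↦ ψ (conj w)) z :=
    hV.mono fun z hz ↦ (hψ' z hz).1.of_le one_le_two
  have h := (hψ.add hψ').eqOn_zero_of_even_of_im_eq_zero hκ hR
    ((hrad.hasRadiatingModes hC1 0).add (hrad.comp_conj.hasRadiatingModes hC1' 0) hC1 hC1')
    (fun z _ ↦ by simp [add_comm])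
    fun z hzV hz ↦ by simp [Complex.conj_eq_iff_im.2 hz, him z hzV hz]
  exact fun z hz ↦ eq_neg_of_add_eq_zero_right (h hz)

/-- The odd extension of `ψ` from the closed upper half-plane to `ℂ` by reflection in the real
axis. It replaces a solution defined off an obstacle in the lower half-plane by an entire one. -/
def oddReflection (ψ : ℂ → ℂ) (z : ℂ) : ℂ := if 0 ≤ z.im then ψ z else -ψ (conj z)

lemma oddReflection_eq_self {z : ℂ} (h : ψ (conj z) = -ψ z) : oddReflection ψ z = ψ z := by
  simp [oddReflection, h]

lemma isHelmholtzOn_oddReflection (hδ : 0 < δ) (hψ : IsHelmholtzOn κ ψ {z | -δ < z.im})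
    (hodd : ∀ z : ℂ, |z.im| < δ → ψ (conj z) = -ψ z) :
    IsHelmholtzOn κ (oddReflection ψ) univ := by
  have hupper : IsHelmholtzOn κ (oddReflection ψ) {z | -δ < z.im} := by
    refine hψ.congr_of_isOpen (isOpen_lt continuous_const Complex.continuous_im) fun z hz ↦ ?_
    rcases le_or_gt 0 z.im with h | h
    · exact if_pos h
    · exact oddReflection_eq_self (hodd z (abs_lt.2 ⟨hz, h.trans hδ⟩))
  have hlower : IsHelmholtzOn κ (oddReflection ψ) {z | z.im < δ} := by
    refine (hψ.comp_conj.neg.mono fun z (hz : z.im < δ) ↦ ?_).congr_of_isOpen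
      (isOpen_lt Complex.continuous_im continuous_const) fun z hz ↦ ?_
    · simpa using hz
    · rcases le_or_gt 0 z.im with h | h
      · rw [oddReflection, if_pos h, Pi.neg_apply,
          hodd z (abs_lt.2 ⟨(neg_lt_zero.2 hδ).trans_le h, hz⟩), neg_neg]
      · exact if_neg h.not_ge
  exact (hupper.union hlower).mono fun z _ ↦ (lt_or_ge (-δ) z.im).imp_right fun h ↦
    h.trans_lt (neg_lt_self hδ)

lemma IsHelmholtzOn.comp_conj_eq_neg_of_abs_im_lt {R : ℝ} (hδ : 0 < δ) (hR : 0 ≤ R)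
    (hψ : IsHelmholtzOn κ ψ {z | -δ < z.im})
    (hodd : ∀ z ∈ (Metric.closedBall 0 R)ᶜ, ψ (conj z) = -ψ z) {z : ℂ} (hz : |z.im| < δ) :
    ψ (conj z) = -ψ z := by
  have hS : {z : ℂ | |z.im| < δ} = Complex.imLm ⁻¹' Ioo (-δ) δ := by
    ext z
    simp [abs_lt]
  have hSc : IsPreconnected {z : ℂ | |z.im| < δ} :=
    hS ▸ ((convex_Ioo _ _).linear_preimage _).isPreconnected
  have hmem := circleMap_mem_compl_closedBall hR (lt_add_one R) 0 0
  have hsum : IsHelmholtzOn κ (ψ + fun z ↦ ψ (conj z)) {z | |z.im| < δ} :=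
    (hψ.mono fun z hz ↦ (abs_lt.1 hz).1).add
      (hψ.comp_conj.mono fun z hz ↦ by simpa using (abs_lt.1 hz).2)
  have h := hsum.eqOn_zero_of_eventuallyEq_zero
    (isOpen_lt Complex.continuous_im.abs continuous_const) hSc (c := circleMap 0 (R + 1) 0)
    (by simpa [circleMap] using hδ)
    (mem_of_superset (Metric.isClosed_closedBall.isOpen_compl.mem_nhds hmem) fun w hw ↦ by
      simp [hodd w hw])
  exact eq_neg_of_add_eq_zero_right (h hz)

lemma IsHelmholtzOn.eqOn_zero_of_im_eq_zero (hκ : 0 < κ) (hU : IsOpen U)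
    (hUc : IsPreconnected U) (hUb : IsBounded Uᶜ) (hδ : 0 < δ) (hδU : {z | -δ < z.im} ⊆ U)
    (hψ : IsHelmholtzOn κ ψ U) (hrad : IsRadiating κ q ψ)
    (him : ∀ z, z.im = 0 → (ψ z).im = 0) : EqOn ψ 0 U := by
  obtain ⟨R, hR, hRU⟩ : ∃ R, 0 ≤ R ∧ (Metric.closedBall (0 : ℂ) R)ᶜ ⊆ U := by
    obtain ⟨R, hR⟩ := hUb.subset_closedBall 0
    exact ⟨max R 0, le_max_right _ _, compl_subset_comm.1
      (hR.trans (Metric.closedBall_subset_closedBall (le_max_left _ _)))⟩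
  have hodd := (hψ.mono hRU).comp_conj_eq_neg hκ hR hrad fun z _ ↦ him z
  have hentire : IsHelmholtzOn κ (oddReflection ψ) univ := isHelmholtzOn_oddReflection hδ
    (hψ.mono hδU) fun z hz ↦ (hψ.mono hδU).comp_conj_eq_neg_of_abs_im_lt hδ hR hodd hz
  have hVopen : IsOpen (Metric.closedBall (0 : ℂ) R)ᶜ := Metric.isClosed_closedBall.isOpen_compl
  have hrad' : IsRadiating κ q (oddReflection ψ) := by
    refine hrad.congr ?_
    have hV : ∀ᶠ z in cobounded ℂ, z ∈ (Metric.closedBall (0 : ℂ) R)ᶜ :=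
      Metric.isBounded_closedBall
    filter_upwards [hV] with z hz
    exact mem_of_superset (hVopen.mem_nhds hz) fun w hw ↦ oddReflection_eq_self (hodd w hw)
  have hzero : oddReflection ψ = 0 := hentire.eq_zero_of_hasRadiatingModes hκ
    (hrad'.hasRadiatingModes (.of_forall fun z ↦ (hentire z trivial).1.of_le one_le_two) 0)
  have hmem := circleMap_mem_compl_closedBall hR (lt_add_one R) 0 0
  refine hψ.eqOn_zero_of_eventuallyEq_zero hU hUc (hRU hmem)
    (mem_of_superset (hVopen.mem_nhds hmem) fun z hz ↦ ?_)
  exact (oddReflection_eq_self (hodd z hz)).symm.trans (congrFun hzero z)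

end Reflection

section Line

variable {E : Type*} [NormedAddCommGroup E] [InnerProductSpace ℝ E]

lemma exists_affineIsometryEquiv_complex_apply_ofReal (hE : Module.finrank ℝ E = 2) (x₀ : E)
    {θ : E} (hθ : ‖θ‖ = 1) : ∃ e : ℂ ≃ᵃⁱ[ℝ] E, ∀ s : ℝ, e s = x₀ + s • θ := by
  have : FiniteDimensional ℝ E := .of_finrank_pos (by omega)
  let l : ℂ ≃ₗᵢ[ℝ] E := Complex.orthonormalBasisOneI.equiv (stdOrthonormalBasis ℝ E)
    (finCongr hE.symm)
  let c : Circle := ⟨l.symm θ, by simp [Submonoid.unitSphere, hθ]⟩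
  refine ⟨((rotation c).trans l).toAffineIsometryEquiv.trans (.constVAdd ℝ E x₀), fun s ↦ ?_⟩
  have h : l (l.symm θ * s) = s • θ := by
    rw [mul_comm, ← Complex.real_smul, map_smul, l.apply_symm_apply]
  simpa using h

lemma exists_pos_forall_im_le_neg_or_forall_le_im {K : Set ℂ} (hK : IsCompact K)
    (hKc : IsConnected K) (h0 : ∀ z ∈ K, z.im ≠ 0) :
    ∃ δ > 0, (∀ z ∈ K, z.im ≤ -δ) ∨ ∀ z ∈ K, δ ≤ z.im := by
  obtain ⟨w, hw, hmin⟩ := hK.exists_isMinOn hKc.nonempty Complex.continuous_im.abs.continuousOn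
  refine ⟨|w.im|, abs_pos.2 (h0 w hw), ?_⟩
  by_contra! h
  obtain ⟨⟨a, ha, haw⟩, b, hb, hbw⟩ := h
  have ha0 : 0 ≤ a.im := by_contra fun ha0 ↦ by
    linarith [isMinOn_iff.1 hmin a ha, abs_of_neg (not_le.1 ha0)]
  have hb0 : b.im ≤ 0 := by_contra fun hb0 ↦ by
    linarith [isMinOn_iff.1 hmin b hb, abs_of_pos (not_le.1 hb0)]
  obtain ⟨z, hz, hz0⟩ := hKc.isPreconnected.intermediate_value hb ha
    Complex.continuous_im.continuousOn ⟨hb0, ha0⟩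
  exact h0 z hz hz0

lemma exists_affineIsometryEquiv_of_line_subset (hE : Module.finrank ℝ E = 2) {U : Set E}
    (hK : IsCompact Uᶜ) (hKc : IsConnected Uᶜ) {x₀ θ : E} (hθ : ‖θ‖ = 1)
    (hU : ∀ s : ℝ, x₀ + s • θ ∈ U) :
    ∃ e : ℂ ≃ᵃⁱ[ℝ] E, (∀ s : ℝ, e s = x₀ + s • θ) ∧ ∃ δ > 0, {z | -δ < z.im} ⊆ e ⁻¹' U := by
  obtain ⟨e, he⟩ := exists_affineIsometryEquiv_complex_apply_ofReal hE x₀ hθ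
  have him : ∀ z ∈ e ⁻¹' Uᶜ, z.im ≠ 0 := fun z hz hz0 ↦ by
    lift z to ℝ using hz0
    exact hz (he z ▸ hU z)
  obtain ⟨δ, hδ, h | h⟩ := exists_pos_forall_im_le_neg_or_forall_le_im
    (e.toHomeomorph.isCompact_preimage.2 hK) (e.toHomeomorph.isConnected_preimage.2 hKc) him
  · exact ⟨e, he, δ, hδ, fun z hz ↦ not_not.1 fun hzU ↦ (h z hzU).not_gt hz⟩
  · refine ⟨Complex.conjLIE.toAffineIsometryEquiv.trans e, fun s ↦ by simpa using he s, δ, hδ,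
      fun z hz ↦ not_not.1 fun hzU ↦ ?_⟩
    have hz' : δ ≤ -z.im := h (conj z) hzU
    exact (le_neg_of_le_neg hz').not_gt hz

end Line

theorem im_on_line_determines_radiation_solution_everywhere
    (κ : ℝ) (hκ : 0 < κ)
    (U : Set R2) (hUopen : IsOpen U) (hUconn : IsConnected U)
    (hKcpt : IsCompact Uᶜ) (hKconn : IsConnected Uᶜ)
    (x₀ θ : R2) (hθ : ‖θ‖ = 1)
    (L : Set R2) (hL : L = Set.range (fun s : ℝ => x₀ + s • θ)) (hLU : L ⊆ U)
    (ψ₁ ψ₂ : R2 → ℂ)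
    (h₁ : IsRadiationSolution κ U ψ₁) (h₂ : IsRadiationSolution κ U ψ₂)
    (him : ∀ x ∈ L, (ψ₁ x).im = (ψ₂ x).im) :
    ∀ x ∈ U, ψ₁ x = ψ₂ x := by
  intro x hx
  have hline (s : ℝ) : x₀ + s • θ ∈ L := hL ▸ mem_range_self s
  obtain ⟨e, he, δ, hδ, hδU⟩ := exists_affineIsometryEquiv_of_line_subset
    finrank_euclideanSpace_fin hKcpt hKconn hθ fun s ↦ hLU (hline s)
  have hψ : IsHelmholtzOn κ (ψ₁ - ψ₂) U := (h₁.isHelmholtzOn hUopen).sub (h₂.isHelmholtzOn hUopen)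
  have hrad : IsRadiating κ (e (e.symm 0)) (ψ₁ - ψ₂) := by
    simpa using h₁.isRadiating_sub h₂ hKcpt
  have hreal (z : ℂ) (hz : z.im = 0) : (((ψ₁ - ψ₂) ∘ e) z).im = 0 := by
    lift z to ℝ using hz
    simp [he, him _ (hline z)]
  have hzero : EqOn ((ψ₁ - ψ₂) ∘ e) 0 (e ⁻¹' U) :=
    (hψ.comp_affineIsometryEquiv e).eqOn_zero_of_im_eq_zero hκ (hUopen.preimage e.continuous)
      (e.toHomeomorph.isPreconnected_preimage.2 hUconn.isPreconnected)
      (e.antilipschitz.isBounded_preimage hKcpt.isBounded) hδ hδU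
      (hrad.comp_affineIsometryEquiv e) hreal
  have hx' : (ψ₁ - ψ₂) (e (e.symm x)) = 0 := hzero (by simpa using hx)
  rwa [e.apply_symm_apply, Pi.sub_apply, sub_eq_zero] at hx'
end
end

section
/- Let κ > 0, n ∈ ℕ, let ψ : ℝ² → ℂ, and let f₀, f₁, …, f_{n+1} be bounded complex-valued functions on the unit circle of ℝ² such that there exist C₀ > 0 and R₀ > 0 with |ψ(x) − √(2/(π κ |x|)) e^{i(κ|x| − π/4)} Σ_{j=0}^{n+1} f_j(x/|x|) / |x|^j| ≤ C₀ |x|^{−n−5/2} for all x with |x| ≥ R₀. Define ψ_n(x) = √(2/(π κ |x|)) e^{i(κ|x| − π/4)} Σ_{j=0}^{n} f_j(x/|x|) / |x|^j, I(x) = √|x| · Im ψ(x), I_n(x) = √|x| · Im ψ_n(x), and J_n(x) = |x|^{n+1} (I(x) − I_n(x)). Then there exist C > 0 and R > 0 such that for all x with |x| ≥ R, |2i·J_n(x) − √(2/(πκ)) (e^{i(κ|x| − π/4)} f_{n+1}(x/|x|) − e^{−i(κ|x| − π/4)} \overline{f_{n+1}(x/|x|)})| ≤ C/|x|. -/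
noncomputable section

open Real Set

/-- The truncated far-field expansion
`ψ_n(x) = √(2/(πκ|x|)) e^{i(κ|x| − π/4)} Σ_{j=0}^{n} f_j(x/|x|)/|x|^j`. -/
def psiN (κ : ℝ) (f : ℕ → R2 → ℂ) (n : ℕ) (x : R2) : ℂ :=
  (Real.sqrt (2 / (π * κ * ‖x‖)) : ℂ) *
    Complex.exp (Complex.I * ((κ * ‖x‖ - π / 4 : ℝ) : ℂ)) *
      ∑ j ∈ Finset.range (n + 1), f j (‖x‖⁻¹ • x) / (‖x‖ : ℂ) ^ j

/-- The rescaled imaginary part `I(x) = √|x| · Im ψ(x)`. -/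
def Ifun (ψ : R2 → ℂ) (x : R2) : ℝ := Real.sqrt ‖x‖ * (ψ x).im

/-- The residual `J_n(x) = |x|^{n+1} (I(x) − I_n(x))`, where `I(x) = √|x| Im ψ(x)`
and `I_n(x) = √|x| Im ψ_n(x)`. -/
def JN (κ : ℝ) (ψ : R2 → ℂ) (f : ℕ → R2 → ℂ) (n : ℕ) (x : R2) : ℝ :=
  ‖x‖ ^ (n + 1) * (Ifun ψ x - Ifun (psiN κ f n) x)

/-!
Multiplying `ψ − ψ_n` by `|x|^{n+1} √|x|` turns the last term of `ψ_{n+1}` into a profile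
`P = √(2/(πκ)) e^{i(κ|x| − π/4)} f_{n+1}(x/|x|)` without decay, and the error `ψ − ψ_{n+1}` into
`O(|x|^{n+3/2} |x|^{-n-5/2}) = O(1/|x|)`. Taking imaginary parts gives `J_n = Im P + O(1/|x|)`, and
`2i Im P = P − conj P`.
-/

/-- The leading far-field profile `√(2/(πκ)) e^{i(κ|x| − π/4)} g(x/|x|)` with coefficient `g`. The
amplitude decay `|x|^{-1/2}` of a radiation solution is left out, as `Ifun` and `JN` rescale by
`√|x|`. -/
def farFieldProfile (κ : ℝ) (g : R2 → ℂ) (x : R2) : ℂ :=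
  (√(2 / (π * κ)) : ℂ) *
    (Complex.exp (Complex.I * ((κ * ‖x‖ - π / 4 : ℝ) : ℂ)) * g (‖x‖⁻¹ • x))

lemma sqrt_mul_sqrt_div_mul (a b : ℝ) {r : ℝ} (hr : 0 < r) :
    √r * √(a / (b * r)) = √(a / b) := by
  rw [← Real.sqrt_mul hr.le, ← div_div, mul_div_cancel₀ _ hr.ne']

lemma pow_mul_sqrt_mul_rpow (m : ℕ) {r : ℝ} (hr : 0 < r) (s : ℝ) :
    r ^ m * √r * r ^ s = r ^ (m + 1 / 2 + s) := by
  rw [Real.sqrt_eq_rpow, ← Real.rpow_natCast, ← Real.rpow_add hr, ← Real.rpow_add hr]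

lemma norm_two_mul_I_mul_sub_sub_conj (a : ℝ) (z : ℂ) :
    ‖2 * Complex.I * (a : ℂ) - (z - (starRingEnd ℂ) z)‖ = 2 * |a - z.im| := by
  have hfactor : 2 * Complex.I * (a : ℂ) - (z - (starRingEnd ℂ) z) =
      2 * Complex.I * ((a - z.im : ℝ) : ℂ) := by
    rw [Complex.sub_conj]
    push_cast
    ring
  rw [hfactor, norm_mul, norm_mul, Complex.norm_two, Complex.norm_I, mul_one, Complex.norm_real,
    Real.norm_eq_abs]

lemma farFieldProfile_sub_conj (κ : ℝ) (g : R2 → ℂ) (x : R2) :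
    farFieldProfile κ g x - (starRingEnd ℂ) (farFieldProfile κ g x) =
      (√(2 / (π * κ)) : ℂ) *
        (Complex.exp (Complex.I * ((κ * ‖x‖ - π / 4 : ℝ) : ℂ)) * g (‖x‖⁻¹ • x) -
          Complex.exp (-Complex.I * ((κ * ‖x‖ - π / 4 : ℝ) : ℂ)) *
            (starRingEnd ℂ) (g (‖x‖⁻¹ • x))) := by
  simp only [farFieldProfile, map_mul, ← Complex.exp_conj, Complex.conj_I, Complex.conj_ofReal,
    mul_sub]

lemma pow_mul_sqrt_mul_psiN_succ_sub (κ : ℝ) (f : ℕ → R2 → ℂ) (n : ℕ) {x : R2} (hx : 0 < ‖x‖) :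
    ((‖x‖ ^ (n + 1) * √‖x‖ : ℝ) : ℂ) * (psiN κ f (n + 1) x - psiN κ f n x) =
      farFieldProfile κ (f (n + 1)) x := by
  have hx' : (‖x‖ : ℂ) ≠ 0 := Complex.ofReal_ne_zero.mpr hx.ne'
  rw [farFieldProfile, ← sqrt_mul_sqrt_div_mul 2 (π * κ) hx, psiN, psiN,
    Finset.sum_range_succ _ (n + 1), ← mul_sub, add_sub_cancel_left]
  push_cast
  field_simp

lemma JN_eq_im (κ : ℝ) (ψ : R2 → ℂ) (f : ℕ → R2 → ℂ) (n : ℕ) (x : R2) :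
    JN κ ψ f n x =
      (((‖x‖ ^ (n + 1) * √‖x‖ : ℝ) : ℂ) * (ψ x - psiN κ f n x)).im := by
  rw [Complex.im_ofReal_mul, Complex.sub_im, JN, Ifun, Ifun]
  ring

lemma JN_sub_im_farFieldProfile (κ : ℝ) (ψ : R2 → ℂ) (f : ℕ → R2 → ℂ) (n : ℕ) {x : R2}
    (hx : 0 < ‖x‖) :
    JN κ ψ f n x - (farFieldProfile κ (f (n + 1)) x).im =
      ‖x‖ ^ (n + 1) * √‖x‖ * (ψ x - psiN κ f (n + 1) x).im := by
  rw [JN_eq_im, ← pow_mul_sqrt_mul_psiN_succ_sub κ f n hx, ← Complex.sub_im, ← mul_sub,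
    sub_sub_sub_cancel_right, Complex.im_ofReal_mul]

lemma abs_JN_sub_im_farFieldProfile_le (κ : ℝ) (ψ : R2 → ℂ) (f : ℕ → R2 → ℂ) (n : ℕ) {x : R2}
    (hx : 0 < ‖x‖) :
    |JN κ ψ f n x - (farFieldProfile κ (f (n + 1)) x).im| ≤
      ‖x‖ ^ (n + 1) * √‖x‖ * ‖ψ x - psiN κ f (n + 1) x‖ := by
  rw [JN_sub_im_farFieldProfile κ ψ f n hx, abs_mul, abs_of_nonneg (by positivity)]
  gcongr
  exact Complex.abs_im_le_norm _

theorem residual_asymptotics_induction_step_general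
    (κ : ℝ) (_hκ : 0 < κ) (n : ℕ) (ψ : R2 → ℂ) (f : ℕ → R2 → ℂ) (C₀ R₀ : ℝ) (hR₀ : 0 < R₀)
    (hasym : ∀ x : R2, R₀ ≤ ‖x‖ →
      ‖ψ x - psiN κ f (n + 1) x‖ ≤ C₀ * ‖x‖ ^ (-(n : ℝ) - 5 / 2))
    (x : R2) (hxR : R₀ ≤ ‖x‖) :
    ‖2 * Complex.I * ((JN κ ψ f n x : ℝ) : ℂ) -
        (√(2 / (π * κ)) : ℂ) *
          (Complex.exp (Complex.I * ((κ * ‖x‖ - π / 4 : ℝ) : ℂ)) * f (n + 1) (‖x‖⁻¹ • x) -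
            Complex.exp (-Complex.I * ((κ * ‖x‖ - π / 4 : ℝ) : ℂ)) *
              (starRingEnd ℂ) (f (n + 1) (‖x‖⁻¹ • x)))‖
      ≤ 2 * C₀ / ‖x‖ := by
  have hx : 0 < ‖x‖ := hR₀.trans_le hxR
  have hrate : ‖x‖ ^ (n + 1) * √‖x‖ * ‖x‖ ^ (-(n : ℝ) - 5 / 2) = ‖x‖⁻¹ := by
    rw [pow_mul_sqrt_mul_rpow _ hx, ← Real.rpow_neg_one]
    congr 1
    push_cast
    ring
  rw [← farFieldProfile_sub_conj, norm_two_mul_I_mul_sub_sub_conj]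
  calc 2 * |JN κ ψ f n x - (farFieldProfile κ (f (n + 1)) x).im|
      ≤ 2 * (‖x‖ ^ (n + 1) * √‖x‖ * ‖ψ x - psiN κ f (n + 1) x‖) := by
        gcongr
        exact abs_JN_sub_im_farFieldProfile_le κ ψ f n hx
    _ ≤ 2 * (‖x‖ ^ (n + 1) * √‖x‖ * (C₀ * ‖x‖ ^ (-(n : ℝ) - 5 / 2))) := by
        gcongr
        exact hasym x hxR
    _ = 2 * C₀ * (‖x‖ ^ (n + 1) * √‖x‖ * ‖x‖ ^ (-(n : ℝ) - 5 / 2)) := by ring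
    _ = 2 * C₀ / ‖x‖ := by rw [hrate, div_eq_mul_inv]

theorem residual_asymptotics_induction_step
    (κ : ℝ) (hκ : 0 < κ) (n : ℕ) (ψ : R2 → ℂ) (f : ℕ → R2 → ℂ)
    (hbdd : ∀ j ≤ n + 1, ∃ M : ℝ, ∀ θ : R2, ‖θ‖ = 1 → ‖f j θ‖ ≤ M)
    (C₀ R₀ : ℝ) (hC₀ : 0 < C₀) (hR₀ : 0 < R₀)
    (hasym : ∀ x : R2, R₀ ≤ ‖x‖ →
      ‖ψ x - psiN κ f (n + 1) x‖ ≤ C₀ * ‖x‖ ^ (-(n : ℝ) - 5 / 2)) :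
    ∃ C > (0 : ℝ), ∃ R > (0 : ℝ), ∀ x : R2, R ≤ ‖x‖ →
      ‖(2 * Complex.I * ((JN κ ψ f n x : ℝ) : ℂ) -
          (Real.sqrt (2 / (π * κ)) : ℂ) *
            (Complex.exp (Complex.I * ((κ * ‖x‖ - π / 4 : ℝ) : ℂ)) * f (n + 1) (‖x‖⁻¹ • x) -
              Complex.exp (-Complex.I * ((κ * ‖x‖ - π / 4 : ℝ) : ℂ)) *
                (starRingEnd ℂ) (f (n + 1) (‖x‖⁻¹ • x))) : ℂ)‖
        ≤ C / ‖x‖ :=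
  ⟨2 * C₀, by positivity, R₀, hR₀,
    residual_asymptotics_induction_step_general κ hκ n ψ f C₀ R₀ hR₀ hasym⟩
end
end

section
/- Let κ > 0, let θ ∈ ℝ² be a unit vector, and for k = 1, 2 let ψ_k : ℝ² → ℂ and (f_j^{(k)})_{j ∈ ℕ} be complex numbers such that for every N ∈ ℕ there exist C_N > 0 and R_N > 0 with |ψ_k(sθ) − √(2/(π κ s)) e^{i(κs − π/4)} Σ_{j=0}^{N} f_j^{(k)} s^{−j}| ≤ C_N s^{−N−3/2} for all s ≥ R_N. If there exists s₀ > 0 such that Im ψ₁(sθ) = Im ψ₂(sθ) for all s ≥ s₀, then f_j^{(1)} = f_j^{(2)} for every j ∈ ℕ. -/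
noncomputable section

open Real Set

open Filter Topology Asymptotics

/-!
Subtracting the two expansions, it suffices to show that an expansion vanishes as soon as the
imaginary part of the expanded function is negligible against every term. If `c` is the first
nonzero coefficient, at order `n`, then taking imaginary parts and dividing by the real factor
`a(s) s⁻ⁿ` gives `Im (e^{iφ(s)} c) → 0`. The phase `φ(s)` sweeps out all large reals, and a periodic
function with a limit at infinity is constant, so `Im (e^{it} c) = 0` for all `t`; the values
`t = 0` and `t = π / 2` give `c = 0`.
-/

lemma eq_of_periodic_of_tendsto_atTop {G X : Type*} [AddCommGroup G] [LinearOrder G]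
    [IsOrderedAddMonoid G] [Archimedean G] [TopologicalSpace X] [T2Space X]
    {f : G → X} {p : G} {l : X} (hf : f.Periodic p) (hp : 0 < p) (hl : Tendsto f atTop (𝓝 l))
    (x : G) : f x = l := by
  have hshift : Tendsto (fun n : ℕ => x + n • p) atTop atTop :=
    tendsto_atTop_add_const_left _ _ (tendsto_id.atTop_nsmul_const hp)
  exact tendsto_nhds_unique (tendsto_const_nhds.congr fun n => (hf.nsmul n x).symm)
    (hl.comp hshift)

lemma eq_zero_of_tendsto_im_exp_mul {c : ℂ}
    (h : Tendsto (fun t : ℝ => (Complex.exp (Complex.I * t) * c).im) atTop (𝓝 0)) : c = 0 := by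
  have hper : (fun t : ℝ => (Complex.exp (Complex.I * t) * c).im).Periodic (2 * π) := fun t => by
    have harg : Complex.I * ((t + 2 * π : ℝ) : ℂ) = Complex.I * t + 2 * π * Complex.I := by
      push_cast
      ring
    simp only [harg, Complex.exp_periodic (Complex.I * t)]
  have hzero := eq_of_periodic_of_tendsto_atTop hper two_pi_pos h
  have him : c.im = 0 := by simpa using hzero 0
  have hre : c.re = 0 := by
    simpa [mul_comm Complex.I, Complex.exp_pi_div_two_mul_I] using hzero (π / 2)
  exact Complex.ext hre him

lemma isLittleO_im {α F : Type*} [Norm F] {l : Filter α} {u : α → ℂ} {g : α → F}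
    (h : u =o[l] g) : (fun x => (u x).im) =o[l] g :=
  (IsBigO.of_bound' (.of_forall fun x => Complex.abs_im_le_norm (u x))).trans_isLittleO h

lemma map_mul_sub_atTop {K : Type*} [Field K] [LinearOrder K] [IsStrictOrderedRing K]
    {k : K} (hk : 0 < k) (b : K) : map (fun x => k * x - b) atTop = atTop :=
  ((OrderIso.mulLeft₀ k hk).trans (OrderIso.subRight b)).map_atTop

/-- The Poincaré asymptotic expansion `u(s) ∼ a(s) e^{iφ(s)} ∑ⱼ fⱼ s⁻ʲ` as `s → ∞`, with real
amplitude `a` and phase `φ`. The remainder after the term of order `N` is only required to be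
negligible against that term's scale `a(s) s⁻ᴺ`. -/
def HasOscillatoryExpansion (a φ : ℝ → ℝ) (u : ℝ → ℂ) (f : ℕ → ℂ) : Prop :=
  ∀ N : ℕ, (fun s : ℝ => u s - a s * Complex.exp (Complex.I * φ s) *
    ∑ j ∈ Finset.range (N + 1), f j / (s : ℂ) ^ j) =o[atTop] fun s => a s / s ^ N

namespace HasOscillatoryExpansion

variable {a φ : ℝ → ℝ} {u u₁ u₂ : ℝ → ℂ} {f f₁ f₂ : ℕ → ℂ}

lemma sub (h₁ : HasOscillatoryExpansion a φ u₁ f₁) (h₂ : HasOscillatoryExpansion a φ u₂ f₂) :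
    HasOscillatoryExpansion a φ (u₁ - u₂) (f₁ - f₂) := fun N => by
  refine ((h₁ N).sub (h₂ N)).congr_left fun s => ?_
  simp only [Pi.sub_apply, sub_div, Finset.sum_sub_distrib]
  ring

lemma isLittleO_sub_leading (h : HasOscillatoryExpansion a φ u f) {n : ℕ}
    (hf : ∀ j < n, f j = 0) :
    (fun s : ℝ => u s - a s * Complex.exp (Complex.I * φ s) * (f n / (s : ℂ) ^ n))
      =o[atTop] fun s => a s / s ^ n := by
  refine (h n).congr_left fun s => ?_
  have hlower : ∑ j ∈ Finset.range n, f j / (s : ℂ) ^ j = 0 :=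
    Finset.sum_eq_zero fun j hj => by rw [hf j (Finset.mem_range.mp hj), zero_div]
  rw [Finset.sum_range_succ, hlower, zero_add]

lemma tendsto_im_leading (h : HasOscillatoryExpansion a φ u f) (ha : ∀ᶠ s in atTop, a s ≠ 0)
    {n : ℕ} (hf : ∀ j < n, f j = 0)
    (him : (fun s => (u s).im) =o[atTop] fun s => a s / s ^ n) :
    Tendsto (fun s => (Complex.exp (Complex.I * φ s) * f n).im) atTop (𝓝 0) := by
  have hterm : (fun s => a s / s ^ n * (Complex.exp (Complex.I * φ s) * f n).im)
      =o[atTop] fun s => a s / s ^ n := by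
    refine (him.sub (isLittleO_im (h.isLittleO_sub_leading hf))).congr_left fun s => ?_
    rw [← Complex.sub_im, sub_sub_cancel, ← Complex.im_ofReal_mul]
    push_cast
    ring_nf
  refine hterm.tendsto_div_nhds_zero.congr' ?_
  filter_upwards [ha, eventually_ne_atTop 0] with s has hs
  exact mul_div_cancel_left₀ _ (div_ne_zero has (pow_ne_zero n hs))

-- `hφ` says that the phases attained beyond any given point contain a half-line `[t, ∞)`.
lemma coeff_eq_zero (h : HasOscillatoryExpansion a φ u f) (ha : ∀ᶠ s in atTop, a s ≠ 0)
    (hφ : atTop ≤ map φ atTop)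
    (him : ∀ n : ℕ, (fun s => (u s).im) =o[atTop] fun s => a s / s ^ n) (n : ℕ) : f n = 0 := by
  induction n using Nat.strong_induction_on with
  | _ n ih =>
    have hlim : Tendsto (fun t : ℝ => (Complex.exp (Complex.I * t) * f n).im) (map φ atTop) (𝓝 0) :=
      tendsto_map'_iff.mpr (h.tendsto_im_leading ha ih (him n))
    exact eq_zero_of_tendsto_im_exp_mul (hlim.mono_left hφ)

end HasOscillatoryExpansion

lemma isBigO_atTop_of_norm_le {α E : Type*} [Preorder α] [Norm E] {u : α → E} {g : α → ℝ}
    {C : ℝ} {R : α} (h : ∀ s, R ≤ s → ‖u s‖ ≤ C * g s) : u =O[atTop] g :=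
  (IsBigO.of_bound' ((eventually_ge_atTop R).mono fun s hs =>
    (h s hs).trans (le_abs_self _))).trans (isBigO_const_mul_self C g atTop)

lemma rpow_isLittleO_rpow_atTop {p q : ℝ} (hpq : p < q) :
    (fun s : ℝ => s ^ p) =o[atTop] fun s => s ^ q := by
  have hzero : (fun s : ℝ => s ^ (-(q - p))) =o[atTop] fun _ => (1 : ℝ) :=
    (isLittleO_one_iff ℝ).mpr (tendsto_rpow_neg_atTop (sub_pos.mpr hpq))
  refine (hzero.mul_isBigO (isBigO_refl (fun s => s ^ q) atTop)).congr' ?_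
    (.of_forall fun s => one_mul _)
  filter_upwards [eventually_gt_atTop 0] with s hs
  rw [← rpow_add hs, neg_sub, sub_add_cancel]

lemma eventually_sqrt_two_div_mul_ne_zero {κ : ℝ} (hκ : 0 < κ) :
    ∀ᶠ s in atTop, √(2 / (π * κ * s)) ≠ 0 := by
  filter_upwards [eventually_gt_atTop 0] with s hs
  positivity

lemma sqrt_two_div_mul_div_pow {κ s : ℝ} (hκ : 0 < κ) (hs : 0 < s) (N : ℕ) :
    √(2 / (π * κ * s)) / s ^ N = √(2 / (π * κ)) * s ^ (-(N : ℝ) - 1 / 2) := by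
  rw [← div_div, sqrt_div (by positivity), sub_eq_add_neg, rpow_add hs, rpow_neg hs.le,
    rpow_neg hs.le, rpow_natCast, ← sqrt_eq_rpow]
  ring

lemma rpow_isLittleO_sqrt_div_pow {κ : ℝ} (hκ : 0 < κ) (N : ℕ) :
    (fun s : ℝ => s ^ (-(N : ℝ) - 3 / 2)) =o[atTop] fun s => √(2 / (π * κ * s)) / s ^ N := by
  have hA : √(2 / (π * κ)) ≠ 0 := by positivity
  have hpow := rpow_isLittleO_rpow_atTop (show -(N : ℝ) - 3 / 2 < -(N : ℝ) - 1 / 2 by linarith)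
  refine (hpow.const_mul_right hA).congr' .rfl ?_
  filter_upwards [eventually_gt_atTop 0] with s hs
  exact (sqrt_two_div_mul_div_pow hκ hs N).symm

lemma hasOscillatoryExpansion_of_isBigO {κ : ℝ} (hκ : 0 < κ) {φ : ℝ → ℝ} {u : ℝ → ℂ} {f : ℕ → ℂ}
    (h : ∀ N : ℕ, (fun s : ℝ => u s - (√(2 / (π * κ * s)) : ℂ) * Complex.exp (Complex.I * φ s) *
      ∑ j ∈ Finset.range (N + 1), f j / (s : ℂ) ^ j) =O[atTop] fun s => s ^ (-(N : ℝ) - 3 / 2)) :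
    HasOscillatoryExpansion (fun s => √(2 / (π * κ * s))) φ u f := fun N =>
  (h N).trans_isLittleO (rpow_isLittleO_sqrt_div_pow hκ N)

theorem im_on_ray_determines_expansion_coefficients_general
    {a φ : ℝ → ℝ} (ha : ∀ᶠ s in atTop, a s ≠ 0) (hφ : atTop ≤ map φ atTop)
    {u₁ u₂ : ℝ → ℂ} {f₁ f₂ : ℕ → ℂ}
    (h₁ : HasOscillatoryExpansion a φ u₁ f₁) (h₂ : HasOscillatoryExpansion a φ u₂ f₂)
    (him : ∀ n : ℕ, (fun s => (u₁ s).im - (u₂ s).im) =o[atTop] fun s => a s / s ^ n) (j : ℕ) :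
    f₁ j = f₂ j :=
  sub_eq_zero.mp ((h₁.sub h₂).coeff_eq_zero ha hφ him j)

theorem im_on_ray_determines_expansion_coefficients
    (κ : ℝ) (hκ : 0 < κ) (θ : R2) (hθ : ‖θ‖ = 1)
    (ψ₁ ψ₂ : R2 → ℂ) (f₁ f₂ : ℕ → ℂ)
    (h₁ : ∀ N : ℕ, ∃ C > (0 : ℝ), ∃ R > (0 : ℝ), ∀ s : ℝ, R ≤ s →
      norm (ψ₁ (s • θ) - (Real.sqrt (2 / (π * κ * s)) : ℂ) *
          Complex.exp (Complex.I * ((κ * s - π / 4 : ℝ) : ℂ)) *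
            ∑ j ∈ Finset.range (N + 1), f₁ j / (s : ℂ) ^ j)
        ≤ C * s ^ (-(N : ℝ) - 3 / 2))
    (h₂ : ∀ N : ℕ, ∃ C > (0 : ℝ), ∃ R > (0 : ℝ), ∀ s : ℝ, R ≤ s →
      norm (ψ₂ (s • θ) - (Real.sqrt (2 / (π * κ * s)) : ℂ) *
          Complex.exp (Complex.I * ((κ * s - π / 4 : ℝ) : ℂ)) *
            ∑ j ∈ Finset.range (N + 1), f₂ j / (s : ℂ) ^ j)
        ≤ C * s ^ (-(N : ℝ) - 3 / 2))
    (s₀ : ℝ) (hs₀ : 0 < s₀)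
    (him : ∀ s : ℝ, s₀ ≤ s → (ψ₁ (s • θ)).im = (ψ₂ (s • θ)).im) :
    ∀ j : ℕ, f₁ j = f₂ j := by
  have expansion₁ := hasOscillatoryExpansion_of_isBigO (u := fun s => ψ₁ (s • θ)) hκ fun N =>
    let ⟨_, _, _, _, hbound⟩ := h₁ N
    isBigO_atTop_of_norm_le hbound
  have expansion₂ := hasOscillatoryExpansion_of_isBigO (u := fun s => ψ₂ (s • θ)) hκ fun N =>
    let ⟨_, _, _, _, hbound⟩ := h₂ N
    isBigO_atTop_of_norm_le hbound
  have im_sub_eq_zero : (fun s => (ψ₁ (s • θ)).im - (ψ₂ (s • θ)).im) =ᶠ[atTop] 0 :=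
    (eventually_ge_atTop s₀).mono fun s hs => sub_eq_zero.mpr (him s hs)
  exact im_on_ray_determines_expansion_coefficients_general
    (eventually_sqrt_two_div_mul_ne_zero hκ) (map_mul_sub_atTop hκ (π / 4)).ge
    expansion₁ expansion₂ fun _ => im_sub_eq_zero.trans_isLittleO (isLittleO_zero _ _)
end
end
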